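/- There is a universal constant C such that for every square-integrable martingale difference sequence {Y_m}_{m=1}^n, W_3(X_n, N) ≤ C ( L_3 + ‖V_n² − 1‖_{3/2}^{1/2} ), where N is a standard normal random variable. -/

import Mathlib

open MeasureTheory ProbabilityTheory Real Filter

noncomputable section

/-- `E[|U|^q]^{1/q}`. -/
def rnorm {Ω : Type*} [MeasurableSpace Ω] (μ : Measure Ω) (q : ℝ) (U : Ω → ℝ) : ℝ :=
  (∫ ω, |U ω| ^ q ∂μ) ^ (1 / q)

/-- Wasserstein distance of order `r` between two laws on `ℝ`, defined as the infimum of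
`E[|U'-V'|^r]^{1/r}` over all couplings. -/
def wassersteinDist (r : ℝ) (μ ν : Measure ℝ) : ℝ :=
  sInf { d : ℝ | ∃ cpl : Measure (ℝ × ℝ), IsProbabilityMeasure cpl ∧
    cpl.map Prod.fst = μ ∧ cpl.map Prod.snd = ν ∧
    d = (∫ p, |p.1 - p.2| ^ r ∂cpl) ^ (1 / r) }

/-- The standard normal law on `ℝ`. -/
def stdGaussian : Measure ℝ := gaussianReal 0 1

/-- `{Y_i}_{i=1}^n` is a square-integrable martingale difference sequence w.r.t. `F`. -/
structure IsMDS {Ω : Type*} [m0 : MeasurableSpace Ω] (μ : Measure Ω)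
    (F : ℕ → MeasurableSpace Ω) (n : ℕ) (Y : ℕ → Ω → ℝ) : Prop where
  protected le : ∀ i, F i ≤ m0
  protected mono : Monotone F
  protected adapted : ∀ i, 1 ≤ i → i ≤ n → Measurable[F i] (Y i)
  protected memL2 : ∀ i, 1 ≤ i → i ≤ n → MemLp (Y i) 2 μ
  protected mdiff : ∀ i, 1 ≤ i → i ≤ n → μ[Y i | F (i - 1)] =ᵐ[μ] 0

/-- An N-function. -/
def IsNFunction (φ : ℝ → ℝ) : Prop :=
  ConvexOn ℝ (Set.Ici 0) φ ∧ (∀ x, 0 ≤ x → 0 ≤ φ x) ∧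
  Tendsto (fun x => φ x / x) (nhdsWithin 0 (Set.Ioi 0)) (nhds 0) ∧
  Tendsto (fun x => φ x / x) atTop atTop ∧
  (∀ x, 0 < x → 0 < φ x)

/-- `φ₁ ≼ φ₂` : the ratio `φ₂/φ₁` is non-decreasing on `(0,∞)`. -/
def Dominates (φ₁ φ₂ : ℝ → ℝ) : Prop :=
  MonotoneOn (fun x => φ₂ x / φ₁ x) (Set.Ioi (0 : ℝ))

/-- Generalized inverse of `φ` on `[0,∞)`. -/
def ninv (φ : ℝ → ℝ) (y : ℝ) : ℝ := sInf {x : ℝ | 0 ≤ x ∧ y ≤ φ x}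

/-- Orlicz norm of the finite sequence `{Y_i}_{i=1}^n`. -/
def orliczSeqNorm {Ω : Type*} [MeasurableSpace Ω] (μ : Measure Ω) (φ : ℝ → ℝ)
    (n : ℕ) (Y : ℕ → Ω → ℝ) : ℝ :=
  sInf {c : ℝ | 0 < c ∧ (1 / n : ℝ) * ∑ i ∈ Finset.Icc 1 n, ∫ ω, φ (|Y i ω| / c) ∂μ ≤ 1}

open scoped ENNReal

/-- Zolotarev's ideal distance of integer order `r`: the supremum of `E f(U) - E f(V)` over
`(r-1)`-times differentiable `f` whose `(r-1)`-st derivative is `1`-Lipschitz. -/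
def zolotarev {Ω : Type*} [MeasurableSpace Ω] (r : ℕ) (μ : Measure Ω) (U : Ω → ℝ)
    (ν : Measure ℝ) : ℝ :=
  sSup { d : ℝ | ∃ f : ℝ → ℝ, ContDiff ℝ (r - 1 : ℕ) f ∧
    LipschitzWith 1 (iteratedDeriv (r - 1) f) ∧
    d = (∫ ω, f (U ω) ∂μ) - ∫ x, f x ∂ν }

/-- The Fenchel–Legendre transform of `φ` (with the supremum over `y ≥ 0`). -/
def fenchel (φ : ℝ → ℝ) (x : ℝ) : ℝ := sSup ((fun y => x * y - φ y) '' Set.Ici 0)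

/-- `C_φ = sup_{x,y>0} (φ⁻¹(x)φ_*⁻¹(x)/x) / (φ⁻¹(y)φ_*⁻¹(y)/y)`. -/
def nratioConst (φ : ℝ → ℝ) : ℝ :=
  sSup { r : ℝ | ∃ x > (0:ℝ), ∃ y > (0:ℝ),
    r = (ninv φ x * ninv (fenchel φ) x / x) / (ninv φ y * ninv (fenchel φ) y / y) }

/-- `λ_m = ( Σ_{i=m+1}^n σ_i²(Y) + β² s_n² )^{1/2}`. -/
def lamCV {Ω : Type*} [MeasurableSpace Ω] (μ : Measure Ω) (F : ℕ → MeasurableSpace Ω)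
    (n : ℕ) (Y : ℕ → Ω → ℝ) (sn β : ℝ) (m : ℕ) (ω : Ω) : ℝ :=
  Real.sqrt ((∑ j ∈ Finset.Icc (m + 1) n, (μ[fun ω' => Y j ω' ^ 2 | F (j - 1)]) ω)
    + β ^ 2 * sn ^ 2)

/-!
Normalize `s_n = 1` and keep the increments only as long as the total conditional variance stays at
most one, then add an independent Gaussian variable carrying the missing variance `R`. Lindeberg's
replacement argument compares the completed sum `X` with the normal law `γ`: replacing one increment
after another by a Gaussian of the same conditional variance costs a third moment each time, so
`E f(X) - E f(Z) ≤ K ∑ E|Y_i|³` for functions `f` with a third-order Taylor bound.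

Rio's idea turns this into a bound on `W₃`. Let `T` be the monotone map with `T(Z) ∼ X`. The
intervals between `y` and `T y` that `T` moves upwards are disjoint from those it moves downwards,
and on a bounded open set the integral of the squared parabolas `((x - a) (b - x) / (b - a))²` over
its components `(a, b)` has a third-order Taylor bound while it grows by `(b - a)³ / 30` over
`(a, b)`. Testing with the difference of the two potentials gives `E|T(Z) - Z|³ ≤ K' ∑ E|Y_i|³`.

The omitted increments are controlled in `L³` by Rosenthal's inequality, the added Gaussian variable
by `E R^{3/2}`, and both by `∑ E|Y_i|³ + E|V_n² - 1|^{3/2}`. Gluing the couplings gives the theorem.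
-/

/-! ### The bump function of a bounded open set -/

section GapBump

/-- The left end of the component of `O` containing `x` (equal to `x` when `x ∉ O`). -/
def gapLeft (O : Set ℝ) (x : ℝ) : ℝ := sSup {z | z ≤ x ∧ z ∉ O}

/-- The right end of the component of `O` containing `x` (equal to `x` when `x ∉ O`). -/
def gapRight (O : Set ℝ) (x : ℝ) : ℝ := sInf {z | x ≤ z ∧ z ∉ O}

/-- The parabola `(x - a) (b - x) / (b - a)` on each component `(a, b)` of `O`; it vanishes off `O`,
where the quotient reads `0 / 0 = 0`. -/
def gapBump (O : Set ℝ) (x : ℝ) : ℝ :=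
  (x - gapLeft O x) * (gapRight O x - x) / (gapRight O x - gapLeft O x)

/-- The derivative of `gapBump O` on `O`, extended by `0` off `O`. -/
def gapBumpSlope (O : Set ℝ) (x : ℝ) : ℝ :=
  (gapLeft O x + gapRight O x - 2 * x) / (gapRight O x - gapLeft O x)

variable {O : Set ℝ} {a b x y z : ℝ}

lemma le_gapLeft (hzx : z ≤ x) (hz : z ∉ O) : z ≤ gapLeft O x :=
  le_csSup ⟨x, fun _ h => h.1⟩ ⟨hzx, hz⟩

lemma gapRight_le (hxz : x ≤ z) (hz : z ∉ O) : gapRight O x ≤ z :=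
  csInf_le ⟨x, fun _ h => h.1⟩ ⟨hxz, hz⟩

lemma gapLeft_congr (hxy : x ≤ y) (hO : Set.Icc x y ⊆ O) : gapLeft O x = gapLeft O y := by
  refine congrArg sSup (Set.ext fun z => ⟨fun hz => ⟨hz.1.trans hxy, hz.2⟩, fun hz => ⟨?_, hz.2⟩⟩)
  by_contra hzx
  exact hz.2 (hO ⟨(not_le.1 hzx).le, hz.1⟩)

lemma gapRight_congr (hxy : x ≤ y) (hO : Set.Icc x y ⊆ O) : gapRight O x = gapRight O y := by
  refine congrArg sInf (Set.ext fun z => ⟨fun hz => ⟨?_, hz.2⟩, fun hz => ⟨hxy.trans hz.1, hz.2⟩⟩)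
  by_contra hyz
  exact hz.2 (hO ⟨hz.1, (not_le.1 hyz).le⟩)

lemma gap_eq_of_uIcc_subset (hO : Set.uIcc x y ⊆ O) :
    gapLeft O x = gapLeft O y ∧ gapRight O x = gapRight O y := by
  rcases le_total x y with hxy | hyx
  · rw [Set.uIcc_of_le hxy] at hO
    exact ⟨gapLeft_congr hxy hO, gapRight_congr hxy hO⟩
  · rw [Set.uIcc_of_ge hyx] at hO
    exact ⟨(gapLeft_congr hyx hO).symm, (gapRight_congr hyx hO).symm⟩

lemma gapLeft_mem (ho : IsOpen O) (hb : BddBelow O) (x : ℝ) :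
    gapLeft O x ∈ {z | z ≤ x ∧ z ∉ O} := by
  obtain ⟨m, hm⟩ := hb
  refine (isClosed_Iic.inter ho.isClosed_compl).csSup_mem
    ⟨min x (m - 1), Set.mem_Iic.2 (min_le_left _ _), ?_⟩ ⟨x, fun _ h => h.1⟩
  exact fun h => absurd (hm h) (not_le.2 ((min_le_right _ _).trans_lt (sub_one_lt m)))

lemma gapRight_mem (ho : IsOpen O) (hb : BddAbove O) (x : ℝ) :
    gapRight O x ∈ {z | x ≤ z ∧ z ∉ O} := by
  obtain ⟨m, hm⟩ := hb
  refine (isClosed_Ici.inter ho.isClosed_compl).csInf_mem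
    ⟨max x (m + 1), Set.mem_Ici.2 (le_max_left _ _), ?_⟩ ⟨x, fun _ h => h.1⟩
  exact fun h => absurd (hm h) (not_le.2 ((lt_add_one m).trans_le (le_max_right _ _)))

lemma abs_parabola_sq_taylor_le (hab : a < b) (hx : x ∈ Set.Icc a b) (hy : y ∈ Set.Icc a b) :
    |((y - a) * (b - y) / (b - a)) ^ 2 - ((x - a) * (b - x) / (b - a)) ^ 2
      - 2 * ((x - a) * (b - x) / (b - a)) * ((a + b - 2 * x) / (b - a)) * (y - x)|
      ≤ 4 * (y - x) ^ 2 := by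
  have hL : 0 < b - a := sub_pos.2 hab
  obtain ⟨hax, hxb⟩ := hx
  obtain ⟨hay, hyb⟩ := hy
  have remainder_eq : ((y - a) * (b - y) / (b - a)) ^ 2 - ((x - a) * (b - x) / (b - a)) ^ 2
      - 2 * ((x - a) * (b - x) / (b - a)) * ((a + b - 2 * x) / (b - a)) * (y - x)
      = (((a + b - x - y) / (b - a)) ^ 2 - 2 * ((x - a) / (b - a) * ((b - x) / (b - a))))
        * (y - x) ^ 2 := by
    field_simp
    ring
  have hsum : ((a + b - x - y) / (b - a)) ^ 2 ≤ 1 := by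
    rw [sq_le_one_iff_abs_le_one, abs_div, abs_of_pos hL, div_le_one hL, abs_le]
    constructor <;> linarith
  have hleft : 0 ≤ (x - a) / (b - a) := div_nonneg (by linarith) hL.le
  have hright : 0 ≤ (b - x) / (b - a) := div_nonneg (by linarith) hL.le
  have hprod : (x - a) / (b - a) * ((b - x) / (b - a)) ≤ 1 :=
    mul_le_one₀ ((div_le_one hL).2 (by linarith)) hright ((div_le_one hL).2 (by linarith))
  rw [remainder_eq, abs_mul, abs_of_nonneg (sq_nonneg (y - x))]
  refine mul_le_mul_of_nonneg_right (abs_le.2 ⟨?_, ?_⟩) (sq_nonneg _)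
  · linarith [sq_nonneg ((a + b - x - y) / (b - a))]
  · linarith [mul_nonneg hleft hright]

lemma parabola_le_parabola {a' b' : ℝ} (hx : x ∈ Set.Ioo a b) (ha : a' ≤ a) (hb : b ≤ b') :
    (x - a) * (b - x) / (b - a) ≤ (x - a') * (b' - x) / (b' - a') := by
  obtain ⟨hax, hxb⟩ := hx
  have : 0 < x - a := sub_pos.2 hax
  have : 0 < b - x := sub_pos.2 hxb
  rw [div_le_div_iff₀ (by linarith) (by linarith)]
  have : 0 ≤ a - a' := sub_nonneg.2 ha
  have : 0 ≤ b' - b := sub_nonneg.2 hb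
  have gain : 0 ≤ (x - a) ^ 2 * (b' - b) + (a - a') * (b - x) ^ 2
      + (a - a') * (b' - b) * (x - a) + (a - a') * (b' - b) * (b - x) := by positivity
  linarith

lemma integral_parabola_sq (hab : a < b) :
    ∫ x in a..b, ((x - a) * (b - x) / (b - a)) ^ 2 = (b - a) ^ 3 / 30 := by
  have hne : b - a ≠ 0 := (sub_pos.2 hab).ne'
  have hderiv : ∀ x ∈ Set.uIcc a b, HasDerivAt (fun x => ((x - a) ^ 3 * (b - a) ^ 2 / 3
      - (x - a) ^ 4 * (b - a) / 2 + (x - a) ^ 5 / 5) / (b - a) ^ 2)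
      (((x - a) * (b - x) / (b - a)) ^ 2) x := by
    intro x _
    have h1 : HasDerivAt (fun x : ℝ => x - a) 1 x := (hasDerivAt_id x).sub_const a
    have h3 := ((h1.pow 3).mul_const ((b - a) ^ 2)).div_const 3
    have h4 := ((h1.pow 4).mul_const (b - a)).div_const 2
    have h5 := (h1.pow 5).div_const 5
    refine (((h3.sub h4).add h5).div_const ((b - a) ^ 2)).congr_deriv ?_
    field_simp
    push_cast
    ring
  rw [intervalIntegral.integral_eq_sub_of_hasDerivAt hderiv
    (Continuous.intervalIntegrable (by fun_prop) _ _)]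
  field_simp
  ring

lemma gapLeft_le (ho : IsOpen O) (hb : BddBelow O) : gapLeft O x ≤ x :=
  (gapLeft_mem ho hb x).1

lemma gapLeft_notMem (ho : IsOpen O) (hb : BddBelow O) : gapLeft O x ∉ O :=
  (gapLeft_mem ho hb x).2

lemma le_gapRight (ho : IsOpen O) (hb : BddAbove O) : x ≤ gapRight O x :=
  (gapRight_mem ho hb x).1

lemma gapRight_notMem (ho : IsOpen O) (hb : BddAbove O) : gapRight O x ∉ O :=
  (gapRight_mem ho hb x).2

lemma gapLeft_le_of_Ioo_subset (ho : IsOpen O) (hb : BddBelow O)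
    (hx : x ∈ Set.Ioo a b) (hsub : Set.Ioo a b ⊆ O) :
    gapLeft O x ≤ a := by
  by_contra! h
  exact gapLeft_notMem ho hb (hsub ⟨h, (gapLeft_le ho hb).trans_lt hx.2⟩)

lemma le_gapRight_of_Ioo_subset (ho : IsOpen O) (hb : BddAbove O)
    (hx : x ∈ Set.Ioo a b) (hsub : Set.Ioo a b ⊆ O) :
    b ≤ gapRight O x := by
  by_contra! h
  exact gapRight_notMem ho hb (hsub ⟨hx.1.trans_le (le_gapRight ho hb), h⟩)

lemma gapBump_nonneg (ho : IsOpen O) (hb : Bornology.IsBounded O) : 0 ≤ gapBump O x := by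
  have hl : gapLeft O x ≤ x := gapLeft_le ho hb.bddBelow
  have hr : x ≤ gapRight O x := le_gapRight ho hb.bddAbove
  exact div_nonneg (mul_nonneg (by linarith) (by linarith)) (by linarith)

lemma gapBump_le_abs_sub (ho : IsOpen O) (hb : Bornology.IsBounded O)
    (hz : z ∉ O) :
    gapBump O x ≤ |x - z| := by
  have hl : gapLeft O x ≤ x := gapLeft_le ho hb.bddBelow
  have hr : x ≤ gapRight O x := le_gapRight ho hb.bddAbove
  refine div_le_of_le_mul₀ (by linarith) (abs_nonneg _) ?_
  rcases le_total z x with hzx | hxz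
  · have hzl := le_gapLeft hzx hz
    rw [abs_of_nonneg (by linarith)]
    exact mul_le_mul (by linarith) (by linarith) (by linarith) (by linarith)
  · have hrz := gapRight_le hxz hz
    rw [abs_of_nonpos (by linarith), mul_comm]
    exact mul_le_mul (by linarith) (by linarith) (by linarith) (by linarith)

lemma gapBump_eq_zero (ho : IsOpen O) (hb : Bornology.IsBounded O) (hx : x ∉ O) : gapBump O x = 0 :=
  le_antisymm (by simpa using gapBump_le_abs_sub ho hb (x := x) hx) (gapBump_nonneg ho hb)

lemma abs_gapBumpSlope_le_one (ho : IsOpen O) (hb : Bornology.IsBounded O) :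
    |gapBumpSlope O x| ≤ 1 := by
  have hl : gapLeft O x ≤ x := gapLeft_le ho hb.bddBelow
  have hr : x ≤ gapRight O x := le_gapRight ho hb.bddAbove
  rw [gapBumpSlope, abs_div, abs_of_nonneg (by linarith : 0 ≤ gapRight O x - gapLeft O x)]
  exact div_le_one_of_le₀ (abs_le.2 ⟨by linarith, by linarith⟩) (by linarith)

lemma parabola_le_gapBump (ho : IsOpen O) (hb : Bornology.IsBounded O)
    (hsub : Set.Ioo a b ⊆ O) (hx : x ∈ Set.Ioo a b) :
    (x - a) * (b - x) / (b - a) ≤ gapBump O x :=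
  parabola_le_parabola hx (gapLeft_le_of_Ioo_subset ho hb.bddBelow hx hsub)
    (le_gapRight_of_Ioo_subset ho hb.bddAbove hx hsub)

lemma abs_gapBump_sq_taylor_le_of_uIcc_subset (ho : IsOpen O) (hb : Bornology.IsBounded O)
    (hxy : Set.uIcc x y ⊆ O) :
    |gapBump O y ^ 2 - gapBump O x ^ 2 - 2 * gapBump O x * gapBumpSlope O x * (y - x)|
      ≤ 4 * (y - x) ^ 2 := by
  obtain ⟨hleft, hright⟩ := gap_eq_of_uIcc_subset hxy
  have hlx : gapLeft O x < x := (gapLeft_le ho hb.bddBelow).lt_of_ne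
    fun h => gapLeft_notMem ho hb.bddBelow (h.symm ▸ hxy Set.left_mem_uIcc)
  have hxr : x ≤ gapRight O x := le_gapRight ho hb.bddAbove
  rw [gapBump, gapBump, gapBumpSlope, ← hleft, ← hright]
  exact abs_parabola_sq_taylor_le (hlx.trans_le hxr) ⟨hlx.le, hxr⟩
    ⟨hleft ▸ gapLeft_le ho hb.bddBelow, hright ▸ le_gapRight ho hb.bddAbove⟩

lemma abs_gapBump_sq_taylor_le (ho : IsOpen O) (hb : Bornology.IsBounded O) (x y : ℝ) :
    |gapBump O y ^ 2 - gapBump O x ^ 2 - 2 * gapBump O x * gapBumpSlope O x * (y - x)|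
      ≤ 4 * (y - x) ^ 2 := by
  by_cases hxy : Set.uIcc x y ⊆ O
  · exact abs_gapBump_sq_taylor_le_of_uIcc_subset ho hb hxy
  -- A point `z ∉ O` between `x` and `y` bounds both values of the bump by `|y - x|`.
  obtain ⟨z, hz, hzO⟩ := Set.not_subset.1 hxy
  have hx : gapBump O x ≤ |y - x| := (gapBump_le_abs_sub ho hb hzO).trans
    (by rw [abs_sub_comm]; exact Set.abs_sub_left_of_mem_uIcc hz)
  have hy : gapBump O y ≤ |y - x| :=
    (gapBump_le_abs_sub ho hb hzO).trans (Set.abs_sub_right_of_mem_uIcc hz)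
  have hx0 : 0 ≤ gapBump O x := gapBump_nonneg ho hb
  have hlin : |2 * gapBump O x * gapBumpSlope O x * (y - x)| ≤ 2 * |y - x| * 1 * |y - x| := by
    rw [abs_mul, abs_mul, abs_mul, abs_of_nonneg hx0, abs_two]
    gcongr
    exact abs_gapBumpSlope_le_one ho hb
  have hx2 := pow_le_pow_left₀ hx0 hx 2
  have hy2 := pow_le_pow_left₀ (gapBump_nonneg ho hb) hy 2
  rw [← sq_abs (y - x)]
  obtain ⟨hlin₁, hlin₂⟩ := abs_le.1 hlin
  refine abs_le.2 ⟨?_, ?_⟩ <;> linarith [sq_nonneg (gapBump O x), sq_nonneg (gapBump O y)]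

lemma hasDerivAt_gapBump_sq (ho : IsOpen O) (hb : Bornology.IsBounded O) (x : ℝ) :
    HasDerivAt (fun t => gapBump O t ^ 2) (2 * gapBump O x * gapBumpSlope O x) x := by
  rw [hasDerivAt_iff_isLittleO]
  refine Asymptotics.IsBigO.trans_isLittleO (.of_bound 4 (Eventually.of_forall fun y => ?_))
    (Asymptotics.isLittleO_pow_sub_sub x (m := 2) (by norm_num))
  simpa [mul_comm (y - x)] using abs_gapBump_sq_taylor_le ho hb x y

lemma continuous_gapBump_sq (ho : IsOpen O) (hb : Bornology.IsBounded O) :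
    Continuous fun t => gapBump O t ^ 2 :=
  continuous_iff_continuousAt.2 fun x => (hasDerivAt_gapBump_sq ho hb x).continuousAt

lemma hasCompactSupport_gapBump_sq (ho : IsOpen O) (hb : Bornology.IsBounded O) :
    HasCompactSupport fun t => gapBump O t ^ 2 :=
  .of_support_subset_isCompact (Metric.isCompact_of_isClosed_isBounded isClosed_closure hb.closure)
    fun x hx => by
      by_contra h
      exact hx (by simp [gapBump_eq_zero ho hb fun hxO => h (subset_closure hxO)])

end GapBump

/-! ### Test functions -/

section TaylorBound

/-- Bounded functions `f` with bounded formal derivatives `f₁`, `f₂` and a global third-order Taylor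
bound with constant `M`. They stand for the functions with Lipschitz second derivative that define
Zolotarev's distance of order three. -/
structure HasTaylorBound (f f₁ f₂ : ℝ → ℝ) (M : ℝ) : Prop where
  measurable : Measurable f
  measurable₁ : Measurable f₁
  measurable₂ : Measurable f₂
  bounded : ∃ B, ∀ x, |f x| ≤ B
  bounded₁ : ∃ B, ∀ x, |f₁ x| ≤ B
  bounded₂ : ∃ B, ∀ x, |f₂ x| ≤ B
  taylor : ∀ x y, |f (x + y) - f x - f₁ x * y - f₂ x * y ^ 2 / 2| ≤ M * |y| ^ 3

variable {Ω : Type*} {m : MeasurableSpace Ω} {μ : Measure Ω} [IsFiniteMeasure μ]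
variable {f f₁ f₂ g g₁ g₂ : ℝ → ℝ} {M N C : ℝ}

lemma exists_abs_sub_le (hf : ∃ B, ∀ x, |f x| ≤ B) (hg : ∃ B, ∀ x, |g x| ≤ B) :
    ∃ B, ∀ x, |f x - g x| ≤ B :=
  let ⟨B, hB⟩ := hf
  let ⟨B', hB'⟩ := hg
  ⟨B + B', fun x => (abs_sub (f x) (g x)).trans (add_le_add (hB x) (hB' x))⟩

lemma HasTaylorBound.sub (hf : HasTaylorBound f f₁ f₂ M) (hg : HasTaylorBound g g₁ g₂ N) :
    HasTaylorBound (fun x => f x - g x) (fun x => f₁ x - g₁ x) (fun x => f₂ x - g₂ x) (M + N) where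
  measurable := hf.measurable.sub hg.measurable
  measurable₁ := hf.measurable₁.sub hg.measurable₁
  measurable₂ := hf.measurable₂.sub hg.measurable₂
  bounded := exists_abs_sub_le hf.bounded hg.bounded
  bounded₁ := exists_abs_sub_le hf.bounded₁ hg.bounded₁
  bounded₂ := exists_abs_sub_le hf.bounded₂ hg.bounded₂
  taylor x y := by
    obtain ⟨hf₁, hf₂⟩ := abs_le.1 (hf.taylor x y)
    obtain ⟨hg₁, hg₂⟩ := abs_le.1 (hg.taylor x y)
    exact abs_le.2 ⟨by linarith, by linarith⟩

lemma integrable_comp_of_bounded (hf : Measurable f) (hB : ∃ B, ∀ x, |f x| ≤ B) {X : Ω → ℝ}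
    (hX : AEMeasurable X μ) : Integrable (fun ω => f (X ω)) μ :=
  let ⟨B, hB⟩ := hB
  .of_bound (hf.comp_aemeasurable hX).aestronglyMeasurable B (Eventually.of_forall fun _ => hB _)

lemma HasTaylorBound.integrable_comp (hf : HasTaylorBound f f₁ f₂ M) {X : Ω → ℝ}
    (hX : AEMeasurable X μ) : Integrable (fun ω => f (X ω)) μ :=
  integrable_comp_of_bounded hf.measurable hf.bounded hX

lemma abs_primitive_taylor_le (hf : Continuous f)
    (htaylor : ∀ x y, |f y - f x - f₁ x * (y - x)| ≤ C * (y - x) ^ 2) (x y : ℝ) :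
    |(∫ t in x..x + y, f t) - f x * y - f₁ x * y ^ 2 / 2| ≤ C / 3 * |y| ^ 3 := by
  have remainder_eq : (∫ t in x..x + y, f t) - f x * y - f₁ x * y ^ 2 / 2
      = ∫ t in x..x + y, (f t - f x - f₁ x * (t - x)) := by
    have hlin : ∫ t in x..x + y, f₁ x * (t - x) = f₁ x * y ^ 2 / 2 := by
      rw [intervalIntegral.integral_const_mul,
        intervalIntegral.integral_comp_sub_right (fun t => t)]
      simp
      ring
    rw [intervalIntegral.integral_sub (Continuous.intervalIntegrable (by fun_prop) _ _)
      (Continuous.intervalIntegrable (by fun_prop) _ _),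
      intervalIntegral.integral_sub (hf.intervalIntegrable _ _) (by simp), hlin]
    simp [mul_comm y]
  have hsq : ∫ t in x..x + y, C * (t - x) ^ 2 = C / 3 * y ^ 3 := by
    rw [intervalIntegral.integral_const_mul,
      intervalIntegral.integral_comp_sub_right (fun t => t ^ 2)]
    simp
    ring
  have hC : 0 ≤ C := by simpa using (abs_nonneg _).trans (htaylor 0 1)
  calc |(∫ t in x..x + y, f t) - f x * y - f₁ x * y ^ 2 / 2|
      ≤ |∫ t in x..x + y, C * (t - x) ^ 2| := by
        rw [remainder_eq]
        exact intervalIntegral.norm_integral_le_abs_of_norm_le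
          (f := fun t => f t - f x - f₁ x * (t - x)) (g := fun t => C * (t - x) ^ 2)
          (Eventually.of_forall fun t => htaylor x t)
          (Continuous.intervalIntegrable (by fun_prop) _ _)
    _ = C / 3 * |y| ^ 3 := by rw [hsq, abs_mul, abs_pow, abs_of_nonneg (by positivity : 0 ≤ C / 3)]

end TaylorBound

section GapPotential

/-- The primitive of the squared bump function of `O`: an increasing test function which grows by at
least `(b - a) ^ 3 / 30` over each interval `(a, b) ⊆ O` and is constant over intervals missing
`O`. -/
def gapPotential (O : Set ℝ) (x : ℝ) : ℝ := ∫ t in (0 : ℝ)..x, gapBump O t ^ 2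

variable {O : Set ℝ} {a b : ℝ}

lemma gapPotential_sub_gapPotential (ho : IsOpen O) (hb : Bornology.IsBounded O) (a b : ℝ) :
    gapPotential O b - gapPotential O a = ∫ t in a..b, gapBump O t ^ 2 :=
  intervalIntegral.integral_interval_sub_left
    ((continuous_gapBump_sq ho hb).intervalIntegrable _ _)
    ((continuous_gapBump_sq ho hb).intervalIntegrable _ _)

lemma gapPotential_mono (ho : IsOpen O) (hb : Bornology.IsBounded O) :
    Monotone (gapPotential O) := by
  intro a b hab
  rw [← sub_nonneg, gapPotential_sub_gapPotential ho hb]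
  exact intervalIntegral.integral_nonneg hab fun _ _ => sq_nonneg _

lemma gapPotential_eq_of_disjoint (ho : IsOpen O) (hb : Bornology.IsBounded O)
    (hab : a ≤ b) (hdisj : Disjoint (Set.Ioo a b) O) :
    gapPotential O a = gapPotential O b := by
  symm
  rw [← sub_eq_zero, gapPotential_sub_gapPotential ho hb, intervalIntegral.integral_of_le hab,
    integral_Ioc_eq_integral_Ioo]
  refine setIntegral_eq_zero_of_forall_eq_zero fun x hx => ?_
  simp [gapBump_eq_zero ho hb (Set.disjoint_left.1 hdisj hx)]

lemma cube_le_gapPotential_sub_of_Ioo_subset (ho : IsOpen O) (hb : Bornology.IsBounded O)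
    (hab : a ≤ b) (hsub : Set.Ioo a b ⊆ O) :
    (b - a) ^ 3 / 30 ≤ gapPotential O b - gapPotential O a := by
  rcases hab.eq_or_lt with rfl | hab
  · simp
  rw [gapPotential_sub_gapPotential ho hb, ← integral_parabola_sq hab]
  refine intervalIntegral.integral_mono_on_of_le_Ioo hab.le
    (Continuous.intervalIntegrable (by fun_prop) _ _)
    ((continuous_gapBump_sq ho hb).intervalIntegrable _ _) fun x hx => ?_
  refine pow_le_pow_left₀ ?_ (parabola_le_gapBump ho hb hsub hx) 2
  exact div_nonneg (mul_nonneg (sub_pos.2 hx.1).le (sub_pos.2 hx.2).le) (sub_pos.2 hab).le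

lemma exists_abs_gapPotential_le (ho : IsOpen O) (hb : Bornology.IsBounded O) :
    ∃ B, ∀ x, |gapPotential O x| ≤ B := by
  have h_int : Integrable fun t => gapBump O t ^ 2 :=
    (continuous_gapBump_sq ho hb).integrable_of_hasCompactSupport
      (hasCompactSupport_gapBump_sq ho hb)
  exact ⟨∫ t, ‖gapBump O t ^ 2‖, fun x =>
    intervalIntegral.norm_integral_le_integral_norm_uIoc.trans
      (setIntegral_le_integral h_int.norm (Eventually.of_forall fun _ => norm_nonneg _))⟩

lemma hasTaylorBound_gapPotential (ho : IsOpen O) (hb : Bornology.IsBounded O) :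
    HasTaylorBound (gapPotential O) (fun x => gapBump O x ^ 2)
      (fun x => 2 * gapBump O x * gapBumpSlope O x) (4 / 3) := by
  have hcont := continuous_gapBump_sq ho hb
  obtain ⟨B, hB⟩ := (hasCompactSupport_gapBump_sq ho hb).exists_bound_of_continuous hcont
  refine ⟨(intervalIntegral.continuous_primitive
      (fun _ _ => hcont.intervalIntegrable _ _) 0).measurable, hcont.measurable, ?_,
    exists_abs_gapPotential_le ho hb, ⟨B, hB⟩, ⟨B + 1, fun x => ?_⟩, fun x y => ?_⟩
  · rw [funext fun x => (hasDerivAt_gapBump_sq ho hb x).deriv.symm]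
    exact measurable_deriv _
  · have hsq : gapBump O x ^ 2 ≤ B := (le_abs_self _).trans (hB x)
    have hslope := abs_gapBumpSlope_le_one ho hb (x := x)
    have hbump : 0 ≤ gapBump O x := gapBump_nonneg ho hb
    rw [abs_mul, abs_of_nonneg (by positivity)]
    linarith [mul_le_mul_of_nonneg_left hslope hbump, sq_nonneg (gapBump O x - 1)]
  · rw [gapPotential_sub_gapPotential ho hb]
    exact abs_primitive_taylor_le hcont (abs_gapBump_sq_taylor_le ho hb) x y

end GapPotential

section Sweep

/-- The union of the intervals `(g y, h y)` over `y ∈ s`. -/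
def sweep (s : Set ℝ) (g h : ℝ → ℝ) : Set ℝ := ⋃ y ∈ s, Set.Ioo (g y) (h y)

variable {s : Set ℝ} {g h T : ℝ → ℝ} {y : ℝ}

lemma Ioo_subset_sweep (hy : y ∈ s) : Set.Ioo (g y) (h y) ⊆ sweep s g h :=
  Set.subset_biUnion_of_mem (u := fun y => Set.Ioo (g y) (h y)) hy

lemma isOpen_sweep : IsOpen (sweep s g h) := isOpen_biUnion fun _ _ => isOpen_Ioo

lemma isBounded_sweep (hg : BddBelow (g '' s)) (hh : BddAbove (h '' s)) :
    Bornology.IsBounded (sweep s g h) := by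
  obtain ⟨a, ha⟩ := hg
  obtain ⟨b, hb⟩ := hh
  refine (Metric.isBounded_Icc a b).subset (Set.iUnion₂_subset fun y hy x hx => ⟨?_, ?_⟩)
  · exact (ha ⟨y, hy, rfl⟩).trans hx.1.le
  · exact hx.2.le.trans (hb ⟨y, hy, rfl⟩)

lemma disjoint_Ioo_sweep (hg : Monotone g) (hh : Monotone h) (y : ℝ) :
    Disjoint (Set.Ioo (g y) (h y)) (sweep s h g) := by
  refine Set.disjoint_iUnion₂_right.2 fun y' _ => Set.disjoint_left.2 fun x hx hx' => ?_
  rcases le_total y y' with hyy | hyy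
  · exact (hx.2.trans_le (hh hyy)).not_gt hx'.1
  · exact (hx'.2.trans_le (hg hyy)).not_gt hx.1

-- Monotonicity of `T` separates the intervals swept upwards from those swept downwards, so that the
-- difference of the two potentials moves in the direction of `T` everywhere.
lemma exists_hasTaylorBound_cube_le (hT : Monotone T) (hs : Bornology.IsBounded s)
    (hTs : Bornology.IsBounded (T '' s)) :
    ∃ f f₁ f₂, HasTaylorBound f f₁ f₂ (8 / 3) ∧ (∀ y, f y ≤ f (T y)) ∧
      ∀ y ∈ s, |T y - y| ^ 3 / 30 ≤ f (T y) - f y := by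
  rw [← Set.image_id s] at hs
  have hub : Bornology.IsBounded (sweep s id T) := isBounded_sweep hs.bddBelow hTs.bddAbove
  have hdb : Bornology.IsBounded (sweep s T id) := isBounded_sweep hTs.bddBelow hs.bddAbove
  have hup {y} (hy : y ≤ T y) := gapPotential_eq_of_disjoint (O := sweep s T id) isOpen_sweep hdb hy
    (disjoint_Ioo_sweep monotone_id hT y)
  have hdown {y} (hy : T y ≤ y) := gapPotential_eq_of_disjoint (O := sweep s id T) isOpen_sweep hub
    hy (disjoint_Ioo_sweep hT monotone_id y)
  have htaylor := (hasTaylorBound_gapPotential isOpen_sweep hub).sub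
    (hasTaylorBound_gapPotential isOpen_sweep hdb)
  norm_num at htaylor
  refine ⟨_, _, _, htaylor, fun y => ?_, fun y hys => ?_⟩ <;> rcases le_total y (T y) with hy | hy
  · linarith [hup hy, gapPotential_mono isOpen_sweep hub hy]
  · linarith [hdown hy, gapPotential_mono isOpen_sweep hdb hy]
  · rw [abs_of_nonneg (sub_nonneg.2 hy)]
    linarith [hup hy, cube_le_gapPotential_sub_of_Ioo_subset isOpen_sweep hub hy
      (Ioo_subset_sweep (g := id) hys)]
  · rw [abs_sub_comm, abs_of_nonneg (sub_nonneg.2 hy)]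
    linarith [hdown hy, cube_le_gapPotential_sub_of_Ioo_subset isOpen_sweep hdb hy
      (Ioo_subset_sweep (h := id) hys)]

end Sweep

/-! ### The monotone coupling -/

section QuantileTransform

variable (γ ν : Measure ℝ) [IsProbabilityMeasure γ]

lemma strictMono_cdf [γ.IsOpenPosMeasure] : StrictMono (cdf γ) := fun a b hab => by
  have hpos : 0 < γ (Set.Ioc a b) := (isOpen_Ioo.measure_pos γ (Set.nonempty_Ioo.2 hab)).trans_le
    (measure_mono Set.Ioo_subset_Ioc_self)
  rw [cdf_eq_real, cdf_eq_real, ← Set.Iic_union_Ioc_eq_Iic hab.le,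
    measureReal_union (Set.Iic_disjoint_Ioc le_rfl) measurableSet_Ioc]
  exact lt_add_of_pos_right _ (ENNReal.toReal_pos hpos.ne' (measure_ne_top _ _))

lemma continuous_cdf [NullSingletonClass γ] : Continuous (cdf γ) := by
  refine continuous_iff_continuousAt.2 fun x => ?_
  rw [(monotone_cdf _).continuousAt_iff_leftLim_eq_rightLim, StieltjesFunction.rightLim_eq]
  have hjump := (cdf γ).measure_singleton x
  rw [measure_cdf, measure_singleton] at hjump
  linarith [ENNReal.ofReal_eq_zero.1 hjump.symm, (monotone_cdf γ).leftLim_le (le_refl x)]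

section

variable [γ.IsOpenPosMeasure]

lemma cdf_pos (x : ℝ) : 0 < cdf γ x :=
  (cdf_nonneg γ (x - 1)).trans_lt (strictMono_cdf γ (sub_one_lt x))

lemma cdf_lt_one (x : ℝ) : cdf γ x < 1 :=
  (strictMono_cdf γ (lt_add_one x)).trans_le (cdf_le_one _ _)

lemma measure_cdf_le [NullSingletonClass γ] {p : ℝ} (hp₀ : 0 ≤ p) (hp₁ : p ≤ 1) :
    γ {y | cdf γ y ≤ p} = ENNReal.ofReal p := by
  rcases hp₀.eq_or_lt with rfl | hp₀
  · simp [(cdf_pos γ _).not_ge]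
  rcases hp₁.eq_or_lt with rfl | hp₁
  · simp [cdf_le_one]
  obtain ⟨a, ha⟩ := ((tendsto_cdf_atBot γ).eventually_lt_const hp₀).exists
  obtain ⟨b, hb⟩ := ((tendsto_cdf_atTop γ).eventually_const_lt hp₁).exists
  obtain ⟨c, rfl⟩ :=
    mem_range_of_exists_le_of_exists_ge (continuous_cdf γ) ⟨a, ha.le⟩ ⟨b, hb.le⟩
  simp_rw [(strictMono_cdf γ).le_iff_le]
  exact (ofReal_cdf γ c).symm

end

/-- The generalized inverse of the distribution function of `ν`. It is meaningful for `0 < p < 1`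
only, where the set is nonempty and bounded below. -/
def quantile (p : ℝ) : ℝ := sInf {x | p ≤ cdf ν x}

lemma quantile_le_iff {p : ℝ} (hp₀ : 0 < p) (hp₁ : p < 1) (x : ℝ) :
    quantile ν p ≤ x ↔ p ≤ cdf ν x := by
  obtain ⟨a, ha⟩ := ((tendsto_cdf_atBot ν).eventually_lt_const hp₀).exists
  obtain ⟨b, hb⟩ := ((tendsto_cdf_atTop ν).eventually_const_lt hp₁).exists
  have hbdd : BddBelow {x | p ≤ cdf ν x} :=
    ⟨a, fun x hx => ((monotone_cdf ν).reflect_lt (ha.trans_le hx)).le⟩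
  refine ⟨fun h => ?_, fun h => csInf_le hbdd h⟩
  have hright : Tendsto (cdf ν) (nhdsWithin x (Set.Ioi x)) (nhds (cdf ν x)) :=
    ((cdf ν).right_continuous x).mono_left (nhdsWithin_mono _ Set.Ioi_subset_Ici_self)
  refine ge_of_tendsto hright ?_
  filter_upwards [self_mem_nhdsWithin] with x' hx'
  obtain ⟨z, hz, hzx⟩ := exists_lt_of_csInf_lt ⟨b, hb.le⟩ (h.trans_lt hx')
  exact hz.trans (monotone_cdf ν hzx.le)

lemma exists_monotone_map_eq [IsProbabilityMeasure ν] [NullSingletonClass γ]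
    [γ.IsOpenPosMeasure] :
    ∃ T : ℝ → ℝ, Monotone T ∧ γ.map T = ν := by
  have galois (y x : ℝ) : quantile ν (cdf γ y) ≤ x ↔ cdf γ y ≤ cdf ν x :=
    quantile_le_iff ν (cdf_pos γ y) (cdf_lt_one γ y) x
  have hT : Monotone fun y => quantile ν (cdf γ y) := fun a b hab =>
    (galois a _).2 ((monotone_cdf γ hab).trans ((galois b _).1 le_rfl))
  refine ⟨_, hT, ?_⟩
  have := Measure.isProbabilityMeasure_map (μ := γ) hT.measurable.aemeasurable
  refine Measure.ext_of_Iic _ _ fun x => ?_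
  rw [Measure.map_apply hT.measurable measurableSet_Iic]
  simp_rw [Set.preimage, Set.mem_Iic, galois]
  rw [measure_cdf_le γ (cdf_nonneg _ _) (cdf_le_one _ _), ofReal_cdf]

end QuantileTransform

section Rio

lemma eLpNorm_three_le_of_lintegral_le {Ω : Type*} {m : MeasurableSpace Ω} {μ : Measure Ω}
    {f : Ω → ℝ} {K : ℝ} (hf : ∫⁻ ω, ENNReal.ofReal (|f ω| ^ 3) ∂μ ≤ ENNReal.ofReal K) :
    eLpNorm f 3 μ ≤ ENNReal.ofReal (K ^ (1 / 3 : ℝ)) := by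
  have hcube (ω : Ω) : ‖f ω‖ₑ ^ (3 : ℝ≥0∞).toReal = ENNReal.ofReal (|f ω| ^ 3) := by
    rw [ENNReal.toReal_ofNat, ENNReal.ofReal_pow (abs_nonneg _), ← Real.enorm_eq_ofReal_abs]
    exact_mod_cast ENNReal.rpow_natCast ‖f ω‖ₑ 3
  rw [eLpNorm_eq_lintegral_rpow_enorm_toReal (by norm_num) (by norm_num)]
  simp_rw [hcube, ENNReal.toReal_ofNat]
  refine (ENNReal.rpow_le_rpow hf (by norm_num)).trans ?_
  rcases le_total 0 K with hK | hK
  · rw [ENNReal.ofReal_rpow_of_nonneg hK (by norm_num)]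
  · simp [ENNReal.ofReal_of_nonpos hK]

variable {γ : Measure ℝ} [IsFiniteMeasure γ] {T : ℝ → ℝ} {K : ℝ}

lemma setLIntegral_cube_displacement_le {s : Set ℝ} (hT : Monotone T) (hsm : MeasurableSet s)
    (hs : Bornology.IsBounded s) (hTs : Bornology.IsBounded (T '' s))
    (hK : ∀ f f₁ f₂, HasTaylorBound f f₁ f₂ (8 / 3) → ∫ x, f x ∂(γ.map T) - ∫ x, f x ∂γ ≤ K) :
    ∫⁻ y in s, ENNReal.ofReal (|T y - y| ^ 3) ∂γ ≤ ENNReal.ofReal (30 * K) := by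
  obtain ⟨f, f₁, f₂, hf, hmono, hcube⟩ := exists_hasTaylorBound_cube_le hT hs hTs
  have hfT : Integrable (fun y => f (T y)) γ := hf.integrable_comp hT.measurable.aemeasurable
  have hfi : Integrable f γ := hf.integrable_comp aemeasurable_id
  have hle := hK f f₁ f₂ hf
  rw [integral_map hT.measurable.aemeasurable hf.measurable.aestronglyMeasurable,
    ← integral_sub hfT hfi] at hle
  calc ∫⁻ y in s, ENNReal.ofReal (|T y - y| ^ 3) ∂γ
      ≤ ∫⁻ y in s, ENNReal.ofReal (30 * (f (T y) - f y)) ∂γ :=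
        setLIntegral_mono' hsm fun y hy => ENNReal.ofReal_le_ofReal (by linarith [hcube y hy])
    _ ≤ ∫⁻ y, ENNReal.ofReal (30 * (f (T y) - f y)) ∂γ := setLIntegral_le_lintegral _ _
    _ = ENNReal.ofReal (30 * ∫ y, (f (T y) - f y) ∂γ) := by
        rw [← integral_const_mul]
        exact (ofReal_integral_eq_lintegral_ofReal ((hfT.sub hfi).const_mul 30)
          (Eventually.of_forall fun y => by simpa using hmono y)).symm
    _ ≤ ENNReal.ofReal (30 * K) := ENNReal.ofReal_le_ofReal (by linarith)

lemma eLpNorm_three_displacement_le (hT : Monotone T)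
    (hK : ∀ f f₁ f₂, HasTaylorBound f f₁ f₂ (8 / 3) → ∫ x, f x ∂(γ.map T) - ∫ x, f x ∂γ ≤ K) :
    eLpNorm (fun y => T y - y) 3 γ ≤ ENNReal.ofReal ((30 * K) ^ (1 / 3 : ℝ)) := by
  refine eLpNorm_three_le_of_lintegral_le ?_
  let s (N : ℕ) : Set ℝ := Metric.closedBall 0 N ∩ T ⁻¹' Metric.closedBall 0 N
  have hmono : Monotone s := fun M N hMN => by
    have hball := Metric.closedBall_subset_closedBall (x := (0 : ℝ)) (Nat.cast_le (α := ℝ).2 hMN)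
    exact Set.inter_subset_inter hball (Set.preimage_mono hball)
  have hunion : ⋃ N, s N = Set.univ := Set.eq_univ_of_forall fun y => by
    obtain ⟨N, hN⟩ := exists_nat_ge (max |y| |T y|)
    exact Set.mem_iUnion.2 ⟨N, by simpa [s] using max_le_iff.1 hN⟩
  rw [← setLIntegral_univ, ← hunion, setLIntegral_iUnion_of_directed _ hmono.directed_le]
  exact iSup_le fun N => setLIntegral_cube_displacement_le hT
    (measurableSet_closedBall.inter (hT.measurable measurableSet_closedBall))
    (Metric.isBounded_closedBall.subset Set.inter_subset_left)
    (Metric.isBounded_closedBall.subset (Set.image_subset_iff.2 Set.inter_subset_right)) hK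

end Rio

/-! ### Conditionally centred variables with a finite third moment -/

instance holderTriple_three_three : ENNReal.HolderTriple 3 3 (3 / 2) where
  inv_add_inv_eq_inv := by
    rw [ENNReal.inv_div (by simp) (by simp), ENNReal.div_eq_inv_mul, ← two_mul, mul_comm]

instance holderTriple_three_threeHalves : ENNReal.HolderTriple 3 (3 / 2) 1 where
  inv_add_inv_eq_inv := by
    calc (3 : ℝ≥0∞)⁻¹ + (3 / 2)⁻¹ = 3⁻¹ * (1 + 2) := by
          rw [ENNReal.inv_div (by simp) (by simp), ENNReal.div_eq_inv_mul, mul_add, mul_one]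
      _ = 3⁻¹ * 3 := by norm_num
      _ = 1⁻¹ := by rw [ENNReal.inv_mul_cancel (by simp) (by simp), inv_one]

lemma one_le_threeHalves : (1 : ℝ≥0∞) ≤ 3 / 2 := by
  rw [ENNReal.le_div_iff_mul_le (by simp) (by simp)]
  norm_num

lemma sqrt_cube_eq_rpow {x : ℝ} (hx : 0 ≤ x) : √x ^ 3 = x ^ (3 / 2 : ℝ) := by
  rw [sqrt_eq_rpow, ← rpow_mul_natCast hx]
  norm_num

section CondCentered

variable {Ω : Type*} {m m0 : MeasurableSpace Ω} {μ : Measure Ω} {f g y v X : Ω → ℝ}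

lemma integral_add₄ {f₁ f₂ f₃ f₄ : Ω → ℝ} (h₁ : Integrable f₁ μ) (h₂ : Integrable f₂ μ)
    (h₃ : Integrable f₃ μ) (h₄ : Integrable f₄ μ) :
    ∫ ω, (f₁ ω + f₂ ω + f₃ ω + f₄ ω) ∂μ =
      ∫ ω, f₁ ω ∂μ + ∫ ω, f₂ ω ∂μ + ∫ ω, f₃ ω ∂μ + ∫ ω, f₄ ω ∂μ := by
  rw [← integral_add' h₁ h₂, ← integral_add' (h₁.add h₂) h₃,
    ← integral_add' ((h₁.add h₂).add h₃) h₄]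
  rfl

lemma integral_sub₄ {f₁ f₂ f₃ f₄ : Ω → ℝ} (h₁ : Integrable f₁ μ) (h₂ : Integrable f₂ μ)
    (h₃ : Integrable f₃ μ) (h₄ : Integrable f₄ μ) :
    ∫ ω, (f₁ ω - f₂ ω - f₃ ω - f₄ ω) ∂μ =
      ∫ ω, f₁ ω ∂μ - ∫ ω, f₂ ω ∂μ - ∫ ω, f₃ ω ∂μ - ∫ ω, f₄ ω ∂μ := by
  rw [← integral_sub' h₁ h₂, ← integral_sub' (h₁.sub h₂) h₃,
    ← integral_sub' ((h₁.sub h₂).sub h₃) h₄]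
  rfl

lemma integrable_abs_cube (hf : MemLp f 3 μ) : Integrable (fun ω => |f ω| ^ 3) μ := by
  simpa using hf.integrable_norm_pow (by norm_num)

lemma integrable_sqrt_abs_cube (hf : MemLp f (3 / 2) μ) :
    Integrable (fun ω => √|f ω| ^ 3) μ := by
  have := hf.integrable_norm_rpow (by simp) (ENNReal.div_ne_top (by simp) (by simp))
  simpa [sqrt_cube_eq_rpow] using this

lemma eLpNorm_threeHalves_eq (hf : MemLp f (3 / 2) μ) :
    eLpNorm f (3 / 2) μ = ENNReal.ofReal ((∫ ω, √|f ω| ^ 3 ∂μ) ^ (2 / 3 : ℝ)) := by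
  rw [hf.eLpNorm_eq_integral_rpow_norm (by simp) (ENNReal.div_ne_top (by simp) (by simp))]
  simp [sqrt_cube_eq_rpow]

lemma integral_sqrt_abs_condExp_cube_le [IsFiniteMeasure μ] (hf : MemLp f (3 / 2) μ) :
    ∫ ω, √|(μ[f | m]) ω| ^ 3 ∂μ ≤ ∫ ω, √|f ω| ^ 3 ∂μ := by
  have h := eLpNorm_condExp_le_eLpNorm (m := m) f one_le_threeHalves (μ := μ)
  have nonneg : ∀ g : Ω → ℝ, 0 ≤ ∫ ω, √|g ω| ^ 3 ∂μ := fun g =>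
    integral_nonneg fun ω => by positivity
  rw [eLpNorm_threeHalves_eq (hf.condExp one_le_threeHalves), eLpNorm_threeHalves_eq hf,
    ENNReal.ofReal_le_ofReal_iff (rpow_nonneg (nonneg _) _)] at h
  exact (rpow_le_rpow_iff (nonneg _) (nonneg _) (by norm_num)).1 h

lemma integral_mul_eq_integral_mul_condExp [IsFiniteMeasure μ] (hm : m ≤ m0)
    (hg : Measurable[m] g) (hgf : Integrable (fun ω => g ω * f ω) μ) (hf : Integrable f μ) :
    ∫ ω, g ω * f ω ∂μ = ∫ ω, g ω * (μ[f | m]) ω ∂μ := by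
  rw [← integral_condExp hm]
  exact integral_congr_ae (condExp_mul_of_stronglyMeasurable_left hg.stronglyMeasurable hgf hf)

/-- `y` has a finite third moment, `E[y | m] = 0` and `E[y² | m] = v` for the given nonnegative
version `v` of the conditional variance: one step of a martingale whose past is `m`. -/
structure IsCondCentered {m0 : MeasurableSpace Ω} (μ : Measure Ω) (m : MeasurableSpace Ω)
    (y v : Ω → ℝ) : Prop where
  protected memLp : MemLp y 3 μ
  protected measurable : Measurable[m] v
  protected nonneg : ∀ ω, 0 ≤ v ω
  protected condExp_eq_zero : μ[y | m] =ᵐ[μ] 0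
  protected condExp_sq : μ[fun ω => y ω ^ 2 | m] =ᵐ[μ] v

namespace IsCondCentered

lemma memLp_sq (h : IsCondCentered μ m y v) : MemLp (fun ω => y ω ^ 2) (3 / 2) μ := by
  simp only [pow_two]
  exact h.memLp.mul h.memLp

lemma indicator [IsFiniteMeasure μ] (h : IsCondCentered μ m y v) {s : Set Ω}
    (hm : m ≤ m0) (hs : MeasurableSet[m] s) :
    IsCondCentered μ m (s.indicator y) (s.indicator v) where
  memLp := h.memLp.indicator (hm s hs)
  measurable := h.measurable.indicator hs
  nonneg := Set.indicator_nonneg fun ω _ => h.nonneg ω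
  condExp_eq_zero := by
    filter_upwards [condExp_indicator (h.memLp.integrable (by norm_num)) hs, h.condExp_eq_zero]
      with ω hω hzero
    simp [hω, hzero]
  condExp_sq := by
    have hsq : (fun ω => s.indicator y ω ^ 2) = s.indicator fun ω => y ω ^ 2 := by
      ext ω
      by_cases hω : ω ∈ s <;> simp [hω]
    rw [hsq]
    filter_upwards [condExp_indicator (h.memLp_sq.integrable one_le_threeHalves) hs, h.condExp_sq]
      with ω hω hv
    simp only [hω, Set.indicator, hv]

lemma memLp_variance (h : IsCondCentered μ m y v) : MemLp v (3 / 2) μ :=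
  (h.memLp_sq.condExp one_le_threeHalves).ae_eq h.condExp_sq

lemma integrable_sqrt_variance_cube (h : IsCondCentered μ m y v) :
    Integrable (fun ω => √(v ω) ^ 3) μ := by
  simpa only [abs_of_nonneg (h.nonneg _)] using integrable_sqrt_abs_cube h.memLp_variance

variable [IsFiniteMeasure μ]

lemma integral_sqrt_variance_cube_le (h : IsCondCentered μ m y v) :
    ∫ ω, √(v ω) ^ 3 ∂μ ≤ ∫ ω, |y ω| ^ 3 ∂μ := by
  calc ∫ ω, √(v ω) ^ 3 ∂μ = ∫ ω, √|(μ[fun ω => y ω ^ 2 | m]) ω| ^ 3 ∂μ := by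
        refine integral_congr_ae ?_
        filter_upwards [h.condExp_sq] with ω hω
        rw [hω, abs_of_nonneg (h.nonneg ω)]
    _ ≤ ∫ ω, √|y ω ^ 2| ^ 3 ∂μ := integral_sqrt_abs_condExp_cube_le h.memLp_sq
    _ = ∫ ω, |y ω| ^ 3 ∂μ := by simp only [abs_sq, sqrt_sq_eq_abs]

lemma integral_mul_eq_zero (h : IsCondCentered μ m y v) (hm : m ≤ m0) (hg : Measurable[m] g)
    (hgy : Integrable (fun ω => g ω * y ω) μ) : ∫ ω, g ω * y ω ∂μ = 0 := by
  rw [integral_mul_eq_integral_mul_condExp hm hg hgy (h.memLp.integrable (by norm_num))]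
  refine integral_eq_zero_of_ae ?_
  filter_upwards [h.condExp_eq_zero] with ω hω
  simp [hω]

lemma integral_mul_sq_eq (h : IsCondCentered μ m y v) (hm : m ≤ m0) (hg : Measurable[m] g)
    (hgy : Integrable (fun ω => g ω * y ω ^ 2) μ) :
    ∫ ω, g ω * y ω ^ 2 ∂μ = ∫ ω, g ω * v ω ∂μ := by
  rw [integral_mul_eq_integral_mul_condExp hm hg hgy (h.memLp_sq.integrable one_le_threeHalves)]
  refine integral_congr_ae ?_
  filter_upwards [h.condExp_sq] with ω hω
  rw [hω]

end IsCondCentered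

lemma abs_add_cube_le_of_nonneg (x y : ℝ) (hx : 0 ≤ x) :
    |x + y| ^ 3 ≤ x ^ 3 + 3 * (x * x * y) + 3 * (x * y ^ 2) + |y| ^ 3 := by
  have hy : y ^ 3 ≤ |y| ^ 3 := by rw [← abs_pow]; exact le_abs_self _
  have hy' : -y ^ 3 ≤ |y| ^ 3 := by rw [← abs_pow]; exact neg_le_abs _
  rcases le_total 0 (x + y) with h | h
  · rw [abs_of_nonneg h]
    nlinarith
  · rw [abs_of_nonpos h]
    have : 0 ≤ x * (2 * x ^ 2 + 6 * x * y + 6 * y ^ 2) :=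
      mul_nonneg hx (by nlinarith [sq_nonneg (x + 2 * y), sq_nonneg (x + y)])
    nlinarith

lemma abs_add_cube_le (x y : ℝ) :
    |x + y| ^ 3 ≤ |x| ^ 3 + 3 * (x * |x| * y) + 3 * (|x| * y ^ 2) + |y| ^ 3 := by
  rcases le_total 0 x with hx | hx
  · simpa only [abs_of_nonneg hx] using abs_add_cube_le_of_nonneg x y hx
  · have h := abs_add_cube_le_of_nonneg (-x) (-y) (neg_nonneg.2 hx)
    rw [← neg_add, abs_neg, abs_neg] at h
    rw [abs_of_nonpos hx]
    linarith

lemma IsCondCentered.integral_abs_add_cube_le [IsFiniteMeasure μ] (h : IsCondCentered μ m y v)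
    (hm : m ≤ m0) (hX : Measurable[m] X) (hX3 : MemLp X 3 μ) :
    ∫ ω, |X ω + y ω| ^ 3 ∂μ ≤
      ∫ ω, |X ω| ^ 3 ∂μ + 3 * ∫ ω, |X ω| * v ω ∂μ + ∫ ω, |y ω| ^ 3 ∂μ := by
  have hXabs : Measurable[m] fun ω => |X ω| := continuous_abs.measurable.comp hX
  have int_lin : Integrable (fun ω => X ω * |X ω| * y ω) μ :=
    (hX3.abs.mul hX3 (r := 3 / 2)).integrable_mul h.memLp
  have int_sq : Integrable (fun ω => |X ω| * y ω ^ 2) μ := hX3.abs.integrable_mul h.memLp_sq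
  have hX_cube := integrable_abs_cube hX3
  have hy_cube := integrable_abs_cube h.memLp
  calc ∫ ω, |X ω + y ω| ^ 3 ∂μ
      ≤ ∫ ω, (|X ω| ^ 3 + 3 * (X ω * |X ω| * y ω) + 3 * (|X ω| * y ω ^ 2) + |y ω| ^ 3) ∂μ :=
        integral_mono (integrable_abs_cube (hX3.add h.memLp))
          (((hX_cube.add (int_lin.const_mul 3)).add (int_sq.const_mul 3)).add hy_cube)
          fun ω => abs_add_cube_le _ _
    _ = ∫ ω, |X ω| ^ 3 ∂μ + 3 * ∫ ω, X ω * |X ω| * y ω ∂μ + 3 * ∫ ω, |X ω| * y ω ^ 2 ∂μ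
        + ∫ ω, |y ω| ^ 3 ∂μ := by
        rw [integral_add₄ hX_cube (int_lin.const_mul 3) (int_sq.const_mul 3) hy_cube,
          integral_const_mul, integral_const_mul]
    _ = _ := by
        rw [h.integral_mul_eq_zero (g := fun ω => X ω * |X ω|) hm (hX.mul hXabs) int_lin,
          h.integral_mul_sq_eq hm hXabs int_sq]
        ring

end CondCentered

/-! ### Rosenthal's inequality for martingales -/

section IncrementSeq

variable {Ω : Type*} {m0 : MeasurableSpace Ω} {μ : Measure Ω} {ℱ : Filtration ℕ m0}
  {y v : ℕ → Ω → ℝ}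

/-- `∑_{i < n} y i`, as a process indexed by `n`. -/
def partialSum (y : ℕ → Ω → ℝ) (n : ℕ) (ω : Ω) : ℝ := ∑ i ∈ Finset.range n, y i ω

@[simp]
lemma partialSum_zero (y : ℕ → Ω → ℝ) (ω : Ω) : partialSum y 0 ω = 0 := Finset.sum_range_zero _

lemma partialSum_succ (y : ℕ → Ω → ℝ) (n : ℕ) (ω : Ω) :
    partialSum y (n + 1) ω = partialSum y n ω + y n ω := Finset.sum_range_succ _ _

lemma partialSum_mono (hv : ∀ k ω, 0 ≤ v k ω) (ω : Ω) : Monotone fun n => partialSum v n ω :=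
  monotone_nat_of_le_succ fun n => by linarith [partialSum_succ v n ω, hv n ω]

lemma partialSum_nonneg (hv : ∀ k ω, 0 ≤ v k ω) (n : ℕ) (ω : Ω) : 0 ≤ partialSum v n ω :=
  Finset.sum_nonneg fun i _ => hv i ω

lemma measurable_partialSum (hy : ∀ k, Measurable[ℱ (k + 1)] (y k)) (n : ℕ) :
    Measurable[ℱ n] (partialSum y n) :=
  Finset.measurable_sum _ fun i hi =>
    (hy i).mono (ℱ.mono (Nat.succ_le_of_lt (Finset.mem_range.1 hi))) le_rfl

lemma martingale_partialSum [IsFiniteMeasure μ] (hy : ∀ k, Measurable[ℱ (k + 1)] (y k))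
    (h_int : ∀ k, Integrable (y k) μ) (hzero : ∀ k, μ[y k | ℱ k] =ᵐ[μ] 0) :
    Martingale (partialSum y) ℱ μ := by
  refine martingale_of_condExp_sub_eq_zero_nat
    (fun n => (measurable_partialSum hy n).stronglyMeasurable)
    (fun n => integrable_finsetSum _ fun i _ => h_int i) fun n => ?_
  have increment : partialSum y (n + 1) - partialSum y n = y n := by
    ext ω
    simp [partialSum_succ]
  rw [increment]
  exact hzero n

/-- `y` is an `L³` martingale difference sequence with conditional variances `v`. Indices are
shifted with respect to the usual convention: `y k` is the increment from time `k` to `k + 1`, and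
`v k` is its variance given the past at time `k`. -/
structure IsIncrementSeq (μ : Measure Ω) (ℱ : Filtration ℕ m0) (y v : ℕ → Ω → ℝ) : Prop where
  protected adapted : ∀ k, Measurable[ℱ (k + 1)] (y k)
  protected isCondCentered : ∀ k, IsCondCentered μ (ℱ k) (y k) (v k)

lemma integral_abs_condExp_mul_le [IsFiniteMeasure μ] {m : MeasurableSpace Ω} (hm : m ≤ m0)
    {f g : Ω → ℝ} (hf : MemLp f 3 μ) (hg : MemLp g (3 / 2) μ) (hgm : Measurable[m] g)
    (hg0 : ∀ ω, 0 ≤ g ω) : ∫ ω, |(μ[f | m]) ω| * g ω ∂μ ≤ ∫ ω, |f ω| * g ω ∂μ := by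
  have hf_abs : MemLp (fun ω => |f ω|) 3 μ := hf.abs
  simp only [mul_comm _ (g _)]
  rw [integral_mul_eq_integral_mul_condExp hm hgm (hg.integrable_mul hf_abs)
    (hf_abs.integrable (by norm_num))]
  refine integral_mono_ae (hg.integrable_mul (hf.condExp (by norm_num)).abs)
    (hg.integrable_mul (hf_abs.condExp (by norm_num))) ?_
  filter_upwards [norm_condExp_le f (m := m) (μ := μ)] with ω hω
  exact mul_le_mul_of_nonneg_left hω (hg0 ω)

lemma three_mul_mul_sq_le {a b : ℝ} (ha : 0 ≤ a) (hb : 0 ≤ b) :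
    3 * (a * b ^ 2) ≤ a ^ 3 / 2 + 8 * b ^ 3 := by
  have hb3 : 0 ≤ b ^ 3 := by positivity
  nlinarith [mul_nonneg (add_nonneg ha (mul_nonneg zero_le_two hb)) (sq_nonneg (a - 2 * b)),
    mul_nonneg ha (sq_nonneg (a - b)), mul_nonneg hb (sq_nonneg (a - 2 * b))]

namespace IsIncrementSeq

lemma variance_nonneg (h : IsIncrementSeq μ ℱ y v) (k : ℕ) (ω : Ω) : 0 ≤ v k ω :=
  (h.isCondCentered k).nonneg ω

lemma memLp_partialSum (h : IsIncrementSeq μ ℱ y v) (n : ℕ) : MemLp (partialSum y n) 3 μ :=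
  memLp_finsetSum _ fun k _ => (h.isCondCentered k).memLp

lemma memLp_partialSum_variance (h : IsIncrementSeq μ ℱ y v) (n : ℕ) :
    MemLp (partialSum v n) (3 / 2) μ :=
  memLp_finsetSum _ fun k _ => (h.isCondCentered k).memLp_variance

lemma measurable_partialSum_variance_succ (h : IsIncrementSeq μ ℱ y v) (k : ℕ) :
    Measurable[ℱ k] (partialSum v (k + 1)) :=
  Finset.measurable_sum _ fun i hi => (h.isCondCentered i).measurable.mono
    (ℱ.mono (Nat.lt_succ_iff.1 (Finset.mem_range.1 hi))) le_rfl

lemma integrable_sqrt_partialSum_variance_cube (h : IsIncrementSeq μ ℱ y v) (n : ℕ) :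
    Integrable (fun ω => √(partialSum v n ω) ^ 3) μ := by
  simpa only [abs_of_nonneg (partialSum_nonneg h.variance_nonneg n _)] using
    integrable_sqrt_abs_cube (h.memLp_partialSum_variance n)

lemma three_mul_integral_abs_partialSum_mul_variance_le (h : IsIncrementSeq μ ℱ y v) (n : ℕ) :
    3 * ∫ ω, |partialSum y n ω| * partialSum v n ω ∂μ ≤
      (∫ ω, |partialSum y n ω| ^ 3 ∂μ) / 2 + 8 * ∫ ω, √(partialSum v n ω) ^ 3 ∂μ := by
  have hS := integrable_abs_cube (h.memLp_partialSum n)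
  have hA := h.integrable_sqrt_partialSum_variance_cube n
  rw [← integral_const_mul, ← integral_const_mul, ← integral_div,
    ← integral_add (hS.div_const 2) (hA.const_mul 8)]
  refine integral_mono
    (((h.memLp_partialSum n).abs.integrable_mul (h.memLp_partialSum_variance n)).const_mul 3)
    ((hS.div_const 2).add (hA.const_mul 8)) fun ω => ?_
  simpa only [sq_sqrt (partialSum_nonneg h.variance_nonneg n ω)] using
    three_mul_mul_sq_le (abs_nonneg (partialSum y n ω)) (sqrt_nonneg (partialSum v n ω))

variable [IsFiniteMeasure μ]

lemma martingale (h : IsIncrementSeq μ ℱ y v) : Martingale (partialSum y) ℱ μ :=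
  martingale_partialSum h.adapted (fun k => (h.isCondCentered k).memLp.integrable (by norm_num))
    fun k => (h.isCondCentered k).condExp_eq_zero

lemma integral_abs_partialSum_mul_variance_le (h : IsIncrementSeq μ ℱ y v) {k n : ℕ}
    (hkn : k ≤ n) :
    ∫ ω, |partialSum y k ω| * v k ω ∂μ ≤ ∫ ω, |partialSum y n ω| * v k ω ∂μ := by
  have hk := h.isCondCentered k
  refine le_of_eq_of_le (integral_congr_ae ?_) (integral_abs_condExp_mul_le (ℱ.le k)
    (h.memLp_partialSum n) hk.memLp_variance hk.measurable hk.nonneg)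
  filter_upwards [h.martingale.condExp_ae_eq hkn] with ω hω
  rw [hω]

lemma integral_abs_partialSum_cube_le_sum (h : IsIncrementSeq μ ℱ y v) {k n : ℕ} (hkn : k ≤ n) :
    ∫ ω, |partialSum y k ω| ^ 3 ∂μ ≤
      3 * ∑ i ∈ Finset.range k, ∫ ω, |partialSum y n ω| * v i ω ∂μ
        + ∑ i ∈ Finset.range k, ∫ ω, |y i ω| ^ 3 ∂μ := by
  induction k with
  | zero => simp
  | succ k ih =>
    have step := (h.isCondCentered k).integral_abs_add_cube_le (ℱ.le k)
      (measurable_partialSum h.adapted k) (h.memLp_partialSum k)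
    have weight := h.integral_abs_partialSum_mul_variance_le (Nat.le_of_succ_le hkn)
    simp only [partialSum_succ y k, Finset.sum_range_succ]
    linarith [ih (Nat.le_of_succ_le hkn)]

theorem integral_abs_partialSum_cube_le (h : IsIncrementSeq μ ℱ y v) (n : ℕ) :
    ∫ ω, |partialSum y n ω| ^ 3 ∂μ ≤
      16 * ∫ ω, √(partialSum v n ω) ^ 3 ∂μ + 2 * ∑ k ∈ Finset.range n, ∫ ω, |y k ω| ^ 3 ∂μ := by
  have total := h.integral_abs_partialSum_cube_le_sum le_rfl (k := n)
  have collect : ∑ i ∈ Finset.range n, ∫ ω, |partialSum y n ω| * v i ω ∂μ =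
      ∫ ω, |partialSum y n ω| * partialSum v n ω ∂μ := by
    simp only [partialSum.eq_def v, Finset.mul_sum]
    exact (integral_finsetSum _ fun i _ =>
      (h.memLp_partialSum n).abs.integrable_mul (h.isCondCentered i).memLp_variance).symm
  rw [collect] at total
  linarith [h.three_mul_integral_abs_partialSum_mul_variance_le n]

end IsIncrementSeq

end IncrementSeq

/-! ### Gaussian smoothing and Lindeberg's replacement argument -/

section GaussianSmoothing

variable {f f₁ f₂ : ℝ → ℝ} {M : ℝ}

/-- `E f(x + √v Z)` for a standard normal `Z`: the heat semigroup at time `v`. -/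
def gaussianSmoothing (f : ℝ → ℝ) (x v : ℝ) : ℝ := ∫ z, f (x + √v * z) ∂gaussianReal 0 1

/-- The third absolute moment of the standard normal law. -/
def gaussianThirdMoment : ℝ := ∫ z, |z| ^ 3 ∂gaussianReal 0 1

lemma gaussianThirdMoment_nonneg : 0 ≤ gaussianThirdMoment :=
  integral_nonneg fun z => by positivity

lemma measurable_gaussianSmoothing (hf : Measurable f) :
    Measurable fun p : ℝ × ℝ => gaussianSmoothing f p.1 p.2 := by
  have : StronglyMeasurable fun q : (ℝ × ℝ) × ℝ => f (q.1.1 + √q.1.2 * q.2) :=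
    Measurable.stronglyMeasurable (by fun_prop)
  exact (this.integral_prod_right (ν := gaussianReal 0 1)).measurable

lemma exists_abs_gaussianSmoothing_le (hf : ∃ B, ∀ x, |f x| ≤ B) :
    ∃ B, ∀ x v, |gaussianSmoothing f x v| ≤ B := by
  obtain ⟨B, hB⟩ := hf
  refine ⟨B, fun x v => ?_⟩
  have h := norm_integral_le_of_norm_le_const (μ := gaussianReal 0 1)
    (f := fun z => f (x + √v * z)) (Eventually.of_forall fun z => hB _)
  simpa [gaussianSmoothing] using h

lemma hasTaylorBound_gaussianSmoothing (hf : HasTaylorBound f f₁ f₂ M) (v : ℝ) :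
    HasTaylorBound (gaussianSmoothing f · v) (gaussianSmoothing f₁ · v)
      (gaussianSmoothing f₂ · v) M where
  measurable := (measurable_gaussianSmoothing hf.measurable).comp measurable_prodMk_right
  measurable₁ := (measurable_gaussianSmoothing hf.measurable₁).comp measurable_prodMk_right
  measurable₂ := (measurable_gaussianSmoothing hf.measurable₂).comp measurable_prodMk_right
  bounded := (exists_abs_gaussianSmoothing_le hf.bounded).imp fun _ h x => h x v
  bounded₁ := (exists_abs_gaussianSmoothing_le hf.bounded₁).imp fun _ h x => h x v
  bounded₂ := (exists_abs_gaussianSmoothing_le hf.bounded₂).imp fun _ h x => h x v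
  taylor x y := by
    have integrable : ∀ {g : ℝ → ℝ} (x), Measurable g → (∃ B, ∀ x, |g x| ≤ B) →
        Integrable (fun z => g (x + √v * z)) (gaussianReal 0 1) := fun x hg hB =>
      integrable_comp_of_bounded hg hB (by fun_prop)
    have hf₁ := (integrable x hf.measurable₁ hf.bounded₁).mul_const y
    have hf₂ := ((integrable x hf.measurable₂ hf.bounded₂).mul_const (y ^ 2)).div_const 2
    have hxy := integrable (x + y) hf.measurable hf.bounded
    have hx := integrable x hf.measurable hf.bounded
    simp only [gaussianSmoothing, ← integral_mul_const, ← integral_div]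
    rw [← integral_sub₄ hxy hx hf₁ hf₂, ← Real.norm_eq_abs]
    refine (norm_integral_le_of_norm_le_const (C := M * |y| ^ 3)
      (Eventually.of_forall fun z => ?_)).trans_eq (by simp)
    rw [add_right_comm]
    exact hf.taylor (x + √v * z) y

lemma gaussianReal_map_sqrt_mul {v : ℝ} (hv : 0 ≤ v) :
    (gaussianReal 0 1).map (fun z => √v * z) = gaussianReal 0 v.toNNReal := by
  rw [gaussianReal_map_const_mul, mul_zero, mul_one]
  congr 1
  exact NNReal.eq (by simp [sq_sqrt hv, hv])

lemma gaussianSmoothing_eq (hf : Measurable f) (x : ℝ) {v : ℝ} (hv : 0 ≤ v) :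
    gaussianSmoothing f x v = ∫ t, f (x + t) ∂gaussianReal 0 v.toNNReal := by
  rw [← gaussianReal_map_sqrt_mul hv,
    integral_map (by fun_prop) (Measurable.aestronglyMeasurable (by fun_prop))]
  rfl

lemma gaussianSmoothing_gaussianSmoothing (hf : Measurable f) (hB : ∃ B, ∀ x, |f x| ≤ B) (x : ℝ)
    {v s : ℝ} (hv : 0 ≤ v) (hs : 0 ≤ s) :
    gaussianSmoothing (gaussianSmoothing f · v) x s = gaussianSmoothing f x (v + s) := by
  have conv : gaussianReal 0 (v + s).toNNReal =
      gaussianReal 0 s.toNNReal ∗ gaussianReal 0 v.toNNReal := by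
    rw [gaussianReal_conv_gaussianReal, toNNReal_add hv hs, add_comm v.toNNReal, add_zero]
  have measurable_smoothing : Measurable (gaussianSmoothing f · v) :=
    (measurable_gaussianSmoothing hf).comp measurable_prodMk_right
  rw [gaussianSmoothing_eq measurable_smoothing x hs, gaussianSmoothing_eq hf x (add_nonneg hv hs),
    conv, Measure.conv, integral_map (by fun_prop) (Measurable.aestronglyMeasurable (by fun_prop)),
    integral_prod _ (integrable_comp_of_bounded (X := fun p : ℝ × ℝ => x + (p.1 + p.2)) hf hB
      (by fun_prop))]
  simp only [gaussianSmoothing_eq hf _ hv, add_assoc]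

lemma integrable_abs_cube_gaussianReal :
    Integrable (fun z : ℝ => |z| ^ 3) (gaussianReal 0 1) :=
  integrable_abs_cube (memLp_id_gaussianReal 3)

lemma integral_sq_gaussianReal : ∫ z, z ^ 2 ∂gaussianReal 0 1 = 1 := by
  have h := variance_id_gaussianReal (μ := 0) (v := 1)
  rw [variance_eq_integral (by fun_prop)] at h
  simpa using h

lemma abs_gaussianSmoothing_sub_le (hf : HasTaylorBound f f₁ f₂ M) (x : ℝ) {s : ℝ}
    (hs : 0 ≤ s) :
    |gaussianSmoothing f x s - f x - f₂ x * s / 2| ≤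
      M * gaussianThirdMoment * √s ^ 3 := by
  have int_f := hf.integrable_comp (μ := gaussianReal 0 1) (X := fun z => x + √s * z) (by fun_prop)
  have int_lin : Integrable (fun z : ℝ => f₁ x * (√s * z)) (gaussianReal 0 1) :=
    (((memLp_id_gaussianReal 1).integrable le_rfl).const_mul _).const_mul _
  have int_sq : Integrable (fun z : ℝ => f₂ x * (√s * z) ^ 2 / 2) (gaussianReal 0 1) := by
    simp only [mul_pow]
    exact (((memLp_id_gaussianReal 2).integrable_sq.const_mul _).const_mul _).div_const _
  have expand : gaussianSmoothing f x s - f x - f₂ x * s / 2 =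
      ∫ z, (f (x + √s * z) - f x - f₁ x * (√s * z) - f₂ x * (√s * z) ^ 2 / 2)
        ∂gaussianReal 0 1 := by
    rw [integral_sub₄ int_f (integrable_const _) int_lin int_sq]
    have centered : ∫ z, √s * z ∂gaussianReal 0 1 = 0 := by
      rw [integral_const_mul, integral_id_gaussianReal, mul_zero]
    simp [gaussianSmoothing, mul_pow, sq_sqrt hs, integral_div, integral_const_mul,
      integral_sq_gaussianReal, centered]
  calc |gaussianSmoothing f x s - f x - f₂ x * s / 2|
      ≤ ∫ z, M * √s ^ 3 * |z| ^ 3 ∂gaussianReal 0 1 := by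
        rw [expand, ← Real.norm_eq_abs]
        refine norm_integral_le_of_norm_le (integrable_abs_cube_gaussianReal.const_mul _)
          (Eventually.of_forall fun z => (hf.taylor x (√s * z)).trans_eq ?_)
        rw [abs_mul, mul_pow, abs_of_nonneg (sqrt_nonneg s), mul_assoc]
    _ = M * gaussianThirdMoment * √s ^ 3 := by
        rw [integral_const_mul, gaussianThirdMoment, mul_right_comm]

end GaussianSmoothing

section Lindeberg

variable {Ω : Type*} {m m0 : MeasurableSpace Ω} {μ : Measure Ω} {f f₁ f₂ : ℝ → ℝ} {M : ℝ}

lemma gaussianSmoothing_add_le (hf : HasTaylorBound f f₁ f₂ M) (x y : ℝ) {V v : ℝ} (hV : 0 ≤ V)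
    (hv : 0 ≤ v) :
    gaussianSmoothing f (x + y) V ≤ gaussianSmoothing f x (V + v) + gaussianSmoothing f₁ x V * y
      + (gaussianSmoothing f₂ x V * y ^ 2 - gaussianSmoothing f₂ x V * v) / 2
      + M * (|y| ^ 3 + gaussianThirdMoment * √v ^ 3) := by
  have smooth := hasTaylorBound_gaussianSmoothing hf V
  have increment := (abs_le.1 (smooth.taylor x y)).2
  have heat := (abs_le.1 (abs_gaussianSmoothing_sub_le smooth x hv)).1
  rw [gaussianSmoothing_gaussianSmoothing hf.measurable hf.bounded x hV hv] at heat
  linarith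

variable [IsFiniteMeasure μ]

lemma integrable_gaussianSmoothing (hf : Measurable f) (hB : ∃ B, ∀ x, |f x| ≤ B) {X V : Ω → ℝ}
    (hX : AEMeasurable X μ) (hV : AEMeasurable V μ) :
    Integrable (fun ω => gaussianSmoothing f (X ω) (V ω)) μ :=
  let ⟨B, hB⟩ := exists_abs_gaussianSmoothing_le hB
  .of_bound ((measurable_gaussianSmoothing hf).comp_aemeasurable
    (hX.prodMk hV)).aestronglyMeasurable B (Eventually.of_forall fun _ => hB _ _)

lemma integrable_gaussianSmoothing_mul (hf : Measurable f) (hB : ∃ B, ∀ x, |f x| ≤ B)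
    {X V g : Ω → ℝ} (hX : AEMeasurable X μ) (hV : AEMeasurable V μ) (hg : Integrable g μ) :
    Integrable (fun ω => gaussianSmoothing f (X ω) (V ω) * g ω) μ :=
  let ⟨_, hB'⟩ := exists_abs_gaussianSmoothing_le hB
  hg.bdd_mul (integrable_gaussianSmoothing hf hB hX hV).aestronglyMeasurable
    (Eventually.of_forall fun _ => hB' _ _)

theorem IsCondCentered.integral_gaussianSmoothing_add_le {X V y v : Ω → ℝ}
    (h : IsCondCentered μ m y v) (hm : m ≤ m0) (hf : HasTaylorBound f f₁ f₂ M)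
    (hX : Measurable[m] X) (hV : Measurable[m] V) (hV0 : ∀ ω, 0 ≤ V ω) :
    ∫ ω, gaussianSmoothing f (X ω + y ω) (V ω) ∂μ ≤
      ∫ ω, gaussianSmoothing f (X ω) (V ω + v ω) ∂μ
        + M * (∫ ω, |y ω| ^ 3 ∂μ + gaussianThirdMoment * ∫ ω, √(v ω) ^ 3 ∂μ) := by
  have hX' := (hX.mono hm le_rfl).aemeasurable (μ := μ)
  have hV' := (hV.mono hm le_rfl).aemeasurable (μ := μ)
  have hy' := h.memLp.aestronglyMeasurable.aemeasurable
  have hv' := (h.measurable.mono hm le_rfl).aemeasurable (μ := μ)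
  have measurable_smooth : ∀ {g : ℝ → ℝ}, Measurable g →
      Measurable[m] fun ω => gaussianSmoothing g (X ω) (V ω) := fun hg =>
    (measurable_gaussianSmoothing hg).comp (hX.prodMk hV)
  have int_lin := integrable_gaussianSmoothing_mul hf.measurable₁ hf.bounded₁ hX' hV'
    (h.memLp.integrable (by norm_num))
  have int_sq := integrable_gaussianSmoothing_mul hf.measurable₂ hf.bounded₂ hX' hV'
    (h.memLp_sq.integrable one_le_threeHalves)
  have int_var := integrable_gaussianSmoothing_mul hf.measurable₂ hf.bounded₂ hX' hV'
    (h.memLp_variance.integrable one_le_threeHalves)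
  have int_quad := (int_sq.sub int_var).div_const 2
  have int_main : Integrable (fun ω => gaussianSmoothing f (X ω) (V ω + v ω)) μ :=
    integrable_gaussianSmoothing hf.measurable hf.bounded hX' (hV'.add hv')
  have int_y := integrable_abs_cube h.memLp
  have int_v := h.integrable_sqrt_variance_cube.const_mul gaussianThirdMoment
  have int_rem := (int_y.add int_v).const_mul M
  have bound := integral_mono
    (integrable_gaussianSmoothing hf.measurable hf.bounded (hX'.add hy') hV')
    (((int_main.add int_lin).add int_quad).add int_rem)
    fun ω => gaussianSmoothing_add_le hf (X ω) (y ω) (hV0 ω) (h.nonneg ω)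
  refine (bound.trans_eq (integral_add₄ int_main int_lin int_quad int_rem)).trans_eq ?_
  rw [h.integral_mul_eq_zero hm (measurable_smooth hf.measurable₁) int_lin, integral_div,
    integral_sub' int_sq int_var, h.integral_mul_sq_eq hm (measurable_smooth hf.measurable₂) int_sq,
    integral_const_mul, integral_add' int_y int_v, integral_const_mul]
  ring

end Lindeberg

namespace IsIncrementSeq

variable {Ω : Type*} {m0 : MeasurableSpace Ω} {μ : Measure Ω} [IsProbabilityMeasure μ]
  {ℱ : Filtration ℕ m0} {y v : ℕ → Ω → ℝ} {f f₁ f₂ : ℝ → ℝ} {M : ℝ}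

/- Each step replaces `y k` by an independent Gaussian of variance `v k`: smoothing by the variance
`1 - ∑_{i < k} v i` still unspent at time `k` accounts for the increments replaced so far. -/
lemma integral_gaussianSmoothing_sub_le (h : IsIncrementSeq μ ℱ y v)
    (hf : HasTaylorBound f f₁ f₂ M) {n : ℕ} (hA : ∀ ω, partialSum v n ω ≤ 1) :
    ∫ ω, gaussianSmoothing f (partialSum y n ω) (1 - partialSum v n ω) ∂μ
        - ∫ x, f x ∂gaussianReal 0 1 ≤
      M * ∑ k ∈ Finset.range n,
        (∫ ω, |y k ω| ^ 3 ∂μ + gaussianThirdMoment * ∫ ω, √(v k ω) ^ 3 ∂μ) := by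
  induction n with
  | zero => simp [gaussianSmoothing]
  | succ n ih =>
    have hA' : ∀ ω, partialSum v n ω ≤ 1 := fun ω =>
      (partialSum_mono h.variance_nonneg ω n.le_succ).trans (hA ω)
    have step := (h.isCondCentered n).integral_gaussianSmoothing_add_le (ℱ.le n) hf
      (measurable_partialSum h.adapted n)
      (measurable_const.sub (h.measurable_partialSum_variance_succ n)) fun ω => sub_nonneg.2 (hA ω)
    have refund : ∀ ω, 1 - partialSum v (n + 1) ω + v n ω = 1 - partialSum v n ω := fun ω => by
      rw [partialSum_succ]
      ring
    simp only [Pi.sub_apply, refund, ← partialSum_succ y n] at step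
    rw [Finset.sum_range_succ, mul_add]
    linarith [ih hA']

end IsIncrementSeq

/-! ### Truncation at total conditional variance one -/

section Truncation

variable {Ω : Type*} {y v : ℕ → Ω → ℝ}

/-- The event that the conditional variances `v 0, …, v k` still fit into total variance one. -/
def withinUnitVariance (v : ℕ → Ω → ℝ) (k : ℕ) : Set Ω := {ω | partialSum v (k + 1) ω ≤ 1}

/-- The increments of `y` occurring while the total conditional variance `∑ v` is at most one. -/
def kept (v y : ℕ → Ω → ℝ) (k : ℕ) : Ω → ℝ := (withinUnitVariance v k).indicator (y k)

/-- The increments of `y` occurring once the total conditional variance `∑ v` exceeds one. -/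
def dropped (v y : ℕ → Ω → ℝ) (k : ℕ) : Ω → ℝ := (withinUnitVariance v k)ᶜ.indicator (y k)

lemma partialSum_kept_add_dropped (v y : ℕ → Ω → ℝ) (n : ℕ) (ω : Ω) :
    partialSum (kept v y) n ω + partialSum (dropped v y) n ω = partialSum y n ω := by
  rw [partialSum, partialSum, ← Finset.sum_add_distrib]
  exact Finset.sum_congr rfl fun k _ => Set.indicator_self_add_compl_apply _ _ _

lemma partialSum_kept_cases (hv : ∀ k ω, 0 ≤ v k ω) (n : ℕ) (ω : Ω) :
    (partialSum v n ω ≤ 1 ∧ partialSum (kept v v) n ω = partialSum v n ω) ∨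
      1 < partialSum v n ω ∧ partialSum (kept v v) n ω ≤ 1 ∧
        ∃ k ∈ Finset.range n, 1 - v k ω ≤ partialSum (kept v v) n ω := by
  induction n with
  | zero => simp
  | succ n ih =>
    have hmono : partialSum v n ω ≤ partialSum v (n + 1) ω :=
      partialSum_mono hv ω n.le_succ
    rcases le_or_gt (partialSum v (n + 1) ω) 1 with hle | hgt
    · have inside : ω ∈ withinUnitVariance v n := hle
      have step : kept v v n ω = v n ω := Set.indicator_of_mem inside _
      rcases ih with ⟨-, heq⟩ | ⟨hgt, -⟩
      · exact .inl ⟨hle, by rw [partialSum_succ, partialSum_succ, heq, step]⟩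
      · exact absurd (hmono.trans hle) (not_le.2 hgt)
    · have outside : ω ∉ withinUnitVariance v n := not_le.2 hgt
      have step : kept v v n ω = 0 := Set.indicator_of_notMem outside _
      have hkept : partialSum (kept v v) (n + 1) ω = partialSum (kept v v) n ω := by
        rw [partialSum_succ, step, add_zero]
      rw [hkept]
      refine .inr ⟨hgt, ?_⟩
      rcases ih with ⟨hle, heq⟩ | ⟨-, hle, k, hk, hgap⟩
      · exact ⟨heq.trans_le hle, n, Finset.self_mem_range_succ n,
          by linarith [partialSum_succ v n ω]⟩
      · exact ⟨hle, k, Finset.range_subset_range.2 n.le_succ hk, hgap⟩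

lemma partialSum_kept_le_one (hv : ∀ k ω, 0 ≤ v k ω) (n : ℕ) (ω : Ω) :
    partialSum (kept v v) n ω ≤ 1 := by
  rcases partialSum_kept_cases hv n ω with ⟨hle, heq⟩ | ⟨-, hle, -⟩
  · exact heq.trans_le hle
  · exact hle

lemma sqrt_cube_le_sum {n k : ℕ} (hk : k ∈ Finset.range n) (ω : Ω) :
    √(v k ω) ^ 3 ≤ ∑ i ∈ Finset.range n, √(v i ω) ^ 3 :=
  Finset.single_le_sum (f := fun i => √(v i ω) ^ 3) (fun i _ => by positivity) hk

lemma sqrt_one_sub_partialSum_kept_cube_le (hv : ∀ k ω, 0 ≤ v k ω) (n : ℕ) (ω : Ω) :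
    √(1 - partialSum (kept v v) n ω) ^ 3 ≤
      √|partialSum v n ω - 1| ^ 3 + ∑ i ∈ Finset.range n, √(v i ω) ^ 3 := by
  rcases partialSum_kept_cases hv n ω with ⟨hle, heq⟩ | ⟨-, -, k, hk, hgap⟩
  · rw [heq, abs_sub_comm, abs_of_nonneg (sub_nonneg.2 hle)]
    exact le_add_of_nonneg_right (Finset.sum_nonneg fun i _ => by positivity)
  · calc √(1 - partialSum (kept v v) n ω) ^ 3 ≤ √(v k ω) ^ 3 := by
          gcongr
          linarith
      _ ≤ ∑ i ∈ Finset.range n, √(v i ω) ^ 3 := sqrt_cube_le_sum hk ω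
      _ ≤ _ := le_add_of_nonneg_left (by positivity)

lemma sqrt_add_cube_le {a b : ℝ} (ha : 0 ≤ a) (hb : 0 ≤ b) :
    √(a + b) ^ 3 ≤ 4 * (√a ^ 3 + √b ^ 3) := by
  have subadditive : √(a + b) ≤ √a + √b := by
    rw [sqrt_le_left (by positivity)]
    nlinarith [sq_sqrt ha, sq_sqrt hb, mul_nonneg (sqrt_nonneg a) (sqrt_nonneg b)]
  calc √(a + b) ^ 3 ≤ (√a + √b) ^ 3 := by gcongr
    _ ≤ 2 ^ (3 - 1) * (√a ^ 3 + √b ^ 3) := add_pow_le (sqrt_nonneg a) (sqrt_nonneg b) 3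
    _ = 4 * (√a ^ 3 + √b ^ 3) := by norm_num

lemma sqrt_partialSum_dropped_cube_le (hv : ∀ k ω, 0 ≤ v k ω) (n : ℕ) (ω : Ω) :
    √(partialSum (dropped v v) n ω) ^ 3 ≤
      4 * (√|partialSum v n ω - 1| ^ 3 + ∑ i ∈ Finset.range n, √(v i ω) ^ 3) := by
  have hsplit := partialSum_kept_add_dropped v v n ω
  rcases partialSum_kept_cases hv n ω with ⟨-, heq⟩ | ⟨-, -, k, hk, hgap⟩
  · rw [show partialSum (dropped v v) n ω = 0 by linarith, sqrt_zero, zero_pow three_ne_zero]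
    have : 0 ≤ ∑ i ∈ Finset.range n, √(v i ω) ^ 3 := Finset.sum_nonneg fun i _ => by positivity
    positivity
  · calc √(partialSum (dropped v v) n ω) ^ 3 ≤ √(|partialSum v n ω - 1| + v k ω) ^ 3 := by
          gcongr
          linarith [le_abs_self (partialSum v n ω - 1)]
      _ ≤ 4 * (√|partialSum v n ω - 1| ^ 3 + √(v k ω) ^ 3) :=
          sqrt_add_cube_le (abs_nonneg _) (hv k ω)
      _ ≤ _ := by
          gcongr
          exact sqrt_cube_le_sum hk ω

end Truncation

section TruncatedSeq

variable {Ω : Type*} {m0 : MeasurableSpace Ω} {μ : Measure Ω} {ℱ : Filtration ℕ m0}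
  {y v : ℕ → Ω → ℝ}

/-- The third-moment and conditional-variance errors of a sum of `n` increments, both to the third
power of the norms `L₃` and `‖V² - 1‖_{3/2}^{1/2}`. -/
def cubedError (μ : Measure Ω) (y v : ℕ → Ω → ℝ) (n : ℕ) : ℝ :=
  ∑ k ∈ Finset.range n, ∫ ω, |y k ω| ^ 3 ∂μ + ∫ ω, √|partialSum v n ω - 1| ^ 3 ∂μ

namespace IsIncrementSeq

lemma measurableSet_withinUnitVariance (h : IsIncrementSeq μ ℱ y v) (k : ℕ) :
    MeasurableSet[ℱ k] (withinUnitVariance v k) :=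
  measurableSet_le (h.measurable_partialSum_variance_succ k) measurable_const

lemma isIncrementSeq_kept [IsFiniteMeasure μ] (h : IsIncrementSeq μ ℱ y v) :
    IsIncrementSeq μ ℱ (kept v y) (kept v v) where
  adapted k := (h.adapted k).indicator
    (ℱ.mono k.le_succ _ (h.measurableSet_withinUnitVariance k))
  isCondCentered k := (h.isCondCentered k).indicator (ℱ.le k) (h.measurableSet_withinUnitVariance k)

lemma isIncrementSeq_dropped [IsFiniteMeasure μ] (h : IsIncrementSeq μ ℱ y v) :
    IsIncrementSeq μ ℱ (dropped v y) (dropped v v) where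
  adapted k := (h.adapted k).indicator
    (ℱ.mono k.le_succ _ (h.measurableSet_withinUnitVariance k).compl)
  isCondCentered k :=
    (h.isCondCentered k).indicator (ℱ.le k) (h.measurableSet_withinUnitVariance k).compl

lemma integral_abs_indicator_cube_le (h : IsIncrementSeq μ ℱ y v) (k : ℕ) {s : Set Ω}
    (hs : MeasurableSet s) : ∫ ω, |s.indicator (y k) ω| ^ 3 ∂μ ≤ ∫ ω, |y k ω| ^ 3 ∂μ :=
  integral_mono (integrable_abs_cube ((h.isCondCentered k).memLp.indicator hs))
    (integrable_abs_cube (h.isCondCentered k).memLp) fun ω =>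
      pow_le_pow_left₀ (abs_nonneg _)
        (by simpa only [Real.norm_eq_abs] using norm_indicator_le_norm_self (s := s) (y k) ω) 3

variable [IsProbabilityMeasure μ]

lemma integral_variance_error_le (h : IsIncrementSeq μ ℱ y v) (n : ℕ) {g : Ω → ℝ}
    (hg : Integrable g μ) {c : ℝ} (hc : 0 ≤ c)
    (hle : ∀ ω, g ω ≤ c * (√|partialSum v n ω - 1| ^ 3 + ∑ i ∈ Finset.range n, √(v i ω) ^ 3)) :
    ∫ ω, g ω ∂μ ≤ c * cubedError μ y v n := by
  have int_defect : Integrable (fun ω => √|partialSum v n ω - 1| ^ 3) μ :=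
    integrable_sqrt_abs_cube ((h.memLp_partialSum_variance n).sub (memLp_const 1))
  have int_each := fun i (_ : i ∈ Finset.range n) =>
    (h.isCondCentered i).integrable_sqrt_variance_cube
  have int_sum := integrable_finsetSum _ int_each
  calc ∫ ω, g ω ∂μ
      ≤ ∫ ω, c * (√|partialSum v n ω - 1| ^ 3 + ∑ i ∈ Finset.range n, √(v i ω) ^ 3) ∂μ :=
        integral_mono hg ((int_defect.add int_sum).const_mul c) hle
    _ = c * (∫ ω, √|partialSum v n ω - 1| ^ 3 ∂μ
          + ∑ i ∈ Finset.range n, ∫ ω, √(v i ω) ^ 3 ∂μ) := by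
        rw [integral_const_mul, integral_add int_defect int_sum, integral_finsetSum _ int_each]
    _ ≤ c * (∫ ω, √|partialSum v n ω - 1| ^ 3 ∂μ
          + ∑ i ∈ Finset.range n, ∫ ω, |y i ω| ^ 3 ∂μ) :=
        mul_le_mul_of_nonneg_left (add_le_add_right (Finset.sum_le_sum fun i _ =>
          (h.isCondCentered i).integral_sqrt_variance_cube_le) _) hc
    _ = c * cubedError μ y v n := by rw [cubedError, add_comm]

lemma integrable_sqrt_one_sub_kept_cube (h : IsIncrementSeq μ ℱ y v) (n : ℕ) :
    Integrable (fun ω => √(1 - partialSum (kept v v) n ω) ^ 3) μ := by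
  simpa only [Pi.sub_apply, abs_of_nonneg (sub_nonneg.2
    (partialSum_kept_le_one h.variance_nonneg n _))] using integrable_sqrt_abs_cube
      ((memLp_const (1 : ℝ)).sub (h.isIncrementSeq_kept.memLp_partialSum_variance n))

lemma integral_sqrt_one_sub_kept_cube_le (h : IsIncrementSeq μ ℱ y v) (n : ℕ) :
    ∫ ω, √(1 - partialSum (kept v v) n ω) ^ 3 ∂μ ≤ cubedError μ y v n := by
  simpa only [one_mul] using h.integral_variance_error_le n
    (h.integrable_sqrt_one_sub_kept_cube n) zero_le_one fun ω =>
      (sqrt_one_sub_partialSum_kept_cube_le h.variance_nonneg n ω).trans_eq (one_mul _).symm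

lemma integral_abs_partialSum_dropped_cube_le (h : IsIncrementSeq μ ℱ y v) (n : ℕ) :
    ∫ ω, |partialSum (dropped v y) n ω| ^ 3 ∂μ ≤ 66 * cubedError μ y v n := by
  have rosenthal := h.isIncrementSeq_dropped.integral_abs_partialSum_cube_le n
  have variance := h.integral_variance_error_le n
    (h.isIncrementSeq_dropped.integrable_sqrt_partialSum_variance_cube n) zero_le_four
    (sqrt_partialSum_dropped_cube_le h.variance_nonneg n)
  have moments : ∑ k ∈ Finset.range n, ∫ ω, |dropped v y k ω| ^ 3 ∂μ ≤
      ∑ k ∈ Finset.range n, ∫ ω, |y k ω| ^ 3 ∂μ := Finset.sum_le_sum fun k _ =>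
    h.integral_abs_indicator_cube_le k (ℱ.le k _ (h.measurableSet_withinUnitVariance k).compl)
  have defect_nonneg : 0 ≤ ∫ ω, √|partialSum v n ω - 1| ^ 3 ∂μ :=
    integral_nonneg fun ω => by positivity
  rw [cubedError] at variance ⊢
  linarith

lemma integral_gaussianSmoothing_kept_sub_le (h : IsIncrementSeq μ ℱ y v) {f f₁ f₂ : ℝ → ℝ}
    {M : ℝ} (hM : 0 ≤ M) (hf : HasTaylorBound f f₁ f₂ M) (n : ℕ) :
    ∫ ω, gaussianSmoothing f (partialSum (kept v y) n ω)
        (1 - partialSum (kept v v) n ω) ∂μ - ∫ x, f x ∂gaussianReal 0 1 ≤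
      M * ((1 + gaussianThirdMoment) * cubedError μ y v n) := by
  refine (h.isIncrementSeq_kept.integral_gaussianSmoothing_sub_le hf
    (partialSum_kept_le_one h.variance_nonneg n)).trans (mul_le_mul_of_nonneg_left ?_ hM)
  have := gaussianThirdMoment_nonneg
  calc ∑ k ∈ Finset.range n, (∫ ω, |kept v y k ω| ^ 3 ∂μ
        + gaussianThirdMoment * ∫ ω, √(kept v v k ω) ^ 3 ∂μ)
      ≤ ∑ k ∈ Finset.range n, (1 + gaussianThirdMoment) * ∫ ω, |y k ω| ^ 3 ∂μ := by
        refine Finset.sum_le_sum fun k _ => ?_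
        have moment := h.integral_abs_indicator_cube_le k
          (ℱ.le k _ (h.measurableSet_withinUnitVariance k))
        rw [add_mul, one_mul]
        exact add_le_add moment (mul_le_mul_of_nonneg_left
          ((h.isIncrementSeq_kept.isCondCentered k).integral_sqrt_variance_cube_le.trans moment)
          gaussianThirdMoment_nonneg)
    _ ≤ (1 + gaussianThirdMoment) * cubedError μ y v n := by
        rw [← Finset.mul_sum, cubedError]
        gcongr
        exact le_add_of_nonneg_right (integral_nonneg fun ω => by positivity)

end IsIncrementSeq

end TruncatedSeq

/-! ### Couplings and the Wasserstein distance -/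

section Wasserstein

lemma exists_map_prodMap_id_eq {α β δ : Type*} [MeasurableSpace α] [MeasurableSpace β]
    [MeasurableSpace δ] [StandardBorelSpace δ] [Nonempty δ] {γ : Measure α}
    [IsProbabilityMeasure γ] {ρ : Measure (β × δ)} [IsFiniteMeasure ρ] {T : α → β}
    (hT : Measurable T) (hγ : γ.map T = ρ.fst) :
    ∃ cpl : Measure (α × δ),
      IsProbabilityMeasure cpl ∧ cpl.fst = γ ∧ cpl.map (Prod.map T id) = ρ := by
  refine ⟨γ ⊗ₘ ρ.condKernel.comap T hT, inferInstance, Measure.fst_compProd _ _, ?_⟩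
  conv_rhs => rw [← ρ.disintegrate ρ.condKernel, ← hγ]
  ext s hs
  rw [Measure.map_apply (by fun_prop) hs, Measure.compProd_apply (hs.preimage (by fun_prop)),
    Measure.compProd_apply hs, lintegral_map (Kernel.measurable_kernel_prodMk_left hs) hT]
  rfl

variable {μ ν : Measure ℝ} {cpl : Measure (ℝ × ℝ)} {r : ℝ}

lemma wassersteinDist_le_of_coupling [IsProbabilityMeasure cpl] (hfst : cpl.map Prod.fst = μ)
    (hsnd : cpl.map Prod.snd = ν) :
    wassersteinDist r μ ν ≤ (∫ p, |p.1 - p.2| ^ r ∂cpl) ^ (1 / r) := by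
  refine csInf_le ⟨0, ?_⟩ ⟨cpl, inferInstance, hfst, hsnd, rfl⟩
  rintro _ ⟨_, -, -, -, rfl⟩
  positivity

lemma integral_abs_rpow_le_of_eLpNorm_le {Ω : Type*} {m : MeasurableSpace Ω} {P : Measure Ω}
    {f : Ω → ℝ} (hf : AEStronglyMeasurable f P) (hr : 0 < r) {c : ℝ} (hc : 0 ≤ c)
    (hle : eLpNorm f (ENNReal.ofReal r) P ≤ ENNReal.ofReal c) :
    (∫ ω, |f ω| ^ r ∂P) ^ (1 / r) ≤ c := by
  have memLp : MemLp f (ENNReal.ofReal r) P := ⟨hf, hle.trans_lt ENNReal.ofReal_lt_top⟩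
  rw [memLp.eLpNorm_eq_integral_rpow_norm (ENNReal.ofReal_pos.2 hr).ne' ENNReal.ofReal_ne_top,
    ENNReal.ofReal_le_ofReal_iff hc, ENNReal.toReal_ofReal hr.le, inv_eq_one_div] at hle
  exact hle

section Glue

variable {Ω : Type*} [MeasurableSpace Ω] {P : Measure Ω} [IsProbabilityMeasure P] {γ : Measure ℝ}
  [IsProbabilityMeasure γ] {X U : Ω → ℝ} {T : ℝ → ℝ}

lemma exists_coupling_eLpNorm_sub_le (hX : Measurable X) (hU : Measurable U) (hT : Measurable T)
    (hγ : γ.map T = P.map U) {q : ℝ≥0∞} (hq : 1 ≤ q) :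
    ∃ cpl : Measure (ℝ × ℝ), IsProbabilityMeasure cpl ∧ cpl.map Prod.fst = P.map X ∧
      cpl.map Prod.snd = γ ∧ eLpNorm (fun p => p.1 - p.2) q cpl ≤
        eLpNorm (fun ω => X ω - U ω) q P + eLpNorm (fun x => T x - x) q γ := by
  have hUX : Measurable fun ω => (U ω, X ω) := hU.prodMk hX
  have hTid : Measurable (Prod.map T (id : ℝ → ℝ)) := hT.prodMap measurable_id
  have hsub : Measurable fun p : ℝ × ℝ => p.2 - p.1 := by fun_prop
  obtain ⟨cpl, _, hfst, hlift⟩ := exists_map_prodMap_id_eq (ρ := P.map fun ω => (U ω, X ω)) hT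
    (by rw [Measure.fst_map_prodMk hX, hγ])
  have hsnd : cpl.map Prod.snd = P.map X := by
    rw [← Measure.snd_map_prodMk hU, ← hlift, Measure.snd, Measure.map_map measurable_snd hTid]
    rfl
  have cost_XU : eLpNorm (fun p : ℝ × ℝ => p.2 - T p.1) q cpl =
      eLpNorm (fun ω => X ω - U ω) q P := by
    calc eLpNorm (fun p : ℝ × ℝ => p.2 - T p.1) q cpl
        = eLpNorm (fun p : ℝ × ℝ => p.2 - p.1) q (cpl.map (Prod.map T id)) :=
          (eLpNorm_map_measure hsub.aestronglyMeasurable hTid.aemeasurable).symm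
      _ = eLpNorm (fun ω => X ω - U ω) q P := by
          rw [hlift, eLpNorm_map_measure hsub.aestronglyMeasurable hUX.aemeasurable]
          rfl
  have cost_T : eLpNorm (fun p : ℝ × ℝ => T p.1 - p.1) q cpl = eLpNorm (fun x => T x - x) q γ := by
    rw [← hfst, Measure.fst, eLpNorm_map_measure (by fun_prop) (by fun_prop)]
    rfl
  refine ⟨cpl.map Prod.swap, Measure.isProbabilityMeasure_map (by fun_prop), ?_, ?_, ?_⟩
  · rwa [← Measure.fst, Measure.fst_map_swap]
  · rwa [← Measure.snd, Measure.snd_map_swap]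
  have split : (fun p : ℝ × ℝ => p.1 - p.2) ∘ Prod.swap =
      (fun p => p.2 - T p.1) + fun p => T p.1 - p.1 :=
    funext fun p => (sub_add_sub_cancel p.2 (T p.1) p.1).symm
  rw [eLpNorm_map_measure (by fun_prop) measurable_swap.aemeasurable, split, ← cost_XU, ← cost_T]
  exact eLpNorm_add_le (by fun_prop) (by fun_prop) hq

theorem wassersteinDist_le_of_transport (hX : Measurable X) (hU : Measurable U) (hT : Measurable T)
    (hγ : γ.map T = P.map U) (hr : 1 ≤ r) {a b : ℝ} (ha₀ : 0 ≤ a) (hb₀ : 0 ≤ b)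
    (ha : eLpNorm (fun ω => X ω - U ω) (ENNReal.ofReal r) P ≤ ENNReal.ofReal a)
    (hb : eLpNorm (fun x => T x - x) (ENNReal.ofReal r) γ ≤ ENNReal.ofReal b) :
    wassersteinDist r (P.map X) γ ≤ a + b := by
  obtain ⟨cpl, _, hfst, hsnd, hle⟩ :=
    exists_coupling_eLpNorm_sub_le hX hU hT hγ (q := ENNReal.ofReal r) (by simpa using hr)
  refine (wassersteinDist_le_of_coupling hfst hsnd).trans
    (integral_abs_rpow_le_of_eLpNorm_le (by fun_prop) (by positivity) (by positivity) ?_)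
  rw [ENNReal.ofReal_add ha₀ hb₀]
  exact hle.trans (add_le_add ha hb)

end Glue

/-- The Bochner integral of a non-integrable function being `0`, an independent coupling of laws
whose difference has no `r`-th moment is assigned the cost `0`. -/
theorem wassersteinDist_le_zero_of_not_memLp [IsProbabilityMeasure μ] [IsProbabilityMeasure ν]
    (hr : 0 < r) (hν : MemLp id (ENNReal.ofReal r) ν) (hμ : ¬MemLp id (ENNReal.ofReal r) μ) :
    wassersteinDist r μ ν ≤ 0 := by
  have hfst : (μ.prod ν).map Prod.fst = μ := by rw [← Measure.fst, Measure.fst_prod]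
  have hsnd : (μ.prod ν).map Prod.snd = ν := by rw [← Measure.snd, Measure.snd_prod]
  refine (wassersteinDist_le_of_coupling hfst hsnd).trans_eq ?_
  rw [integral_undef, zero_rpow (one_div_pos.2 hr).ne']
  intro h_int
  have memLp_sub : MemLp (fun p : ℝ × ℝ => p.1 - p.2) (ENNReal.ofReal r) (μ.prod ν) := by
    rw [← integrable_norm_rpow_iff (by fun_prop) (ENNReal.ofReal_pos.2 hr).ne'
      ENNReal.ofReal_ne_top, ENNReal.toReal_ofReal hr.le]
    exact h_int
  have memLp_snd : MemLp (Prod.snd : ℝ × ℝ → ℝ) (ENNReal.ofReal r) (μ.prod ν) := hν.comp_snd μ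
  apply hμ
  rw [← hfst, memLp_map_measure_iff (by fun_prop) (by fun_prop)]
  convert memLp_sub.add memLp_snd using 1
  ext p
  exact (sub_add_cancel _ _).symm

end Wasserstein

/-! ### Comparison of the martingale with the normal law -/

section Comparison

variable {Ω : Type*} {m0 : MeasurableSpace Ω} {μ : Measure Ω} {ℱ : Filtration ℕ m0}
  {y v : ℕ → Ω → ℝ}

/-- The sum of `n` increments completed to total variance one by an independent Gaussian variable,
the second coordinate of `Ω × ℝ`. -/
def gaussianCompletion (y v : ℕ → Ω → ℝ) (n : ℕ) (p : Ω × ℝ) : ℝ :=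
  partialSum y n p.1 + √(1 - partialSum v n p.1) * p.2

lemma cubedError_nonneg (μ : Measure Ω) (y v : ℕ → Ω → ℝ) (n : ℕ) : 0 ≤ cubedError μ y v n :=
  add_nonneg (Finset.sum_nonneg fun k _ => integral_nonneg fun ω => by positivity)
    (integral_nonneg fun ω => by positivity)

lemma eLpNorm_three_le_of_integral_le {Ω' : Type*} {m : MeasurableSpace Ω'} {P : Measure Ω'}
    {f : Ω' → ℝ} (hf : Integrable (fun ω => |f ω| ^ 3) P) {K : ℝ}
    (hle : ∫ ω, |f ω| ^ 3 ∂P ≤ K) : eLpNorm f 3 P ≤ ENNReal.ofReal (K ^ (1 / 3 : ℝ)) := by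
  refine eLpNorm_three_le_of_lintegral_le ?_
  rw [← ofReal_integral_eq_lintegral_ofReal hf (.of_forall fun ω => by positivity)]
  exact ENNReal.ofReal_le_ofReal hle

namespace IsIncrementSeq

lemma measurable_gaussianCompletion (h : IsIncrementSeq μ ℱ y v) (n : ℕ) :
    Measurable (gaussianCompletion y v n) := by
  have hS : Measurable (partialSum y n) := (measurable_partialSum h.adapted n).mono (ℱ.le n) le_rfl
  have hV : Measurable (partialSum v n) := Finset.measurable_sum _ fun k _ =>
    (h.isCondCentered k).measurable.mono (ℱ.le k) le_rfl
  unfold gaussianCompletion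
  fun_prop

variable [IsProbabilityMeasure μ]

lemma integral_comp_gaussianCompletion (h : IsIncrementSeq μ ℱ y v) {f : ℝ → ℝ}
    (hf : Measurable f) (hB : ∃ B, ∀ x, |f x| ≤ B) (n : ℕ) :
    ∫ x, f x ∂((μ.prod (gaussianReal 0 1)).map (gaussianCompletion y v n)) =
      ∫ ω, gaussianSmoothing f (partialSum y n ω) (1 - partialSum v n ω) ∂μ := by
  have hmeas := h.measurable_gaussianCompletion n
  rw [integral_map hmeas.aemeasurable hf.aestronglyMeasurable,
    integral_prod _ (integrable_comp_of_bounded hf hB hmeas.aemeasurable)]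
  rfl

lemma eLpNorm_partialSum_dropped_le (h : IsIncrementSeq μ ℱ y v) (n : ℕ) :
    eLpNorm (partialSum (dropped v y) n) 3 μ ≤
      ENNReal.ofReal ((66 * cubedError μ y v n) ^ (1 / 3 : ℝ)) :=
  eLpNorm_three_le_of_integral_le
    (integrable_abs_cube (h.isIncrementSeq_dropped.memLp_partialSum n))
    (h.integral_abs_partialSum_dropped_cube_le n)

lemma eLpNorm_sqrt_one_sub_kept_mul_le (h : IsIncrementSeq μ ℱ y v) (n : ℕ) :
    eLpNorm (fun p : Ω × ℝ => √(1 - partialSum (kept v v) n p.1) * p.2) 3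
        (μ.prod (gaussianReal 0 1)) ≤
      ENNReal.ofReal ((gaussianThirdMoment * cubedError μ y v n) ^ (1 / 3 : ℝ)) := by
  have factor : ∀ p : Ω × ℝ, |√(1 - partialSum (kept v v) n p.1) * p.2| ^ 3 =
      √(1 - partialSum (kept v v) n p.1) ^ 3 * |p.2| ^ 3 := fun p => by
    rw [abs_mul, abs_of_nonneg (sqrt_nonneg _), mul_pow]
  refine eLpNorm_three_le_of_integral_le ?_ ?_ <;> simp only [factor]
  · exact (h.integrable_sqrt_one_sub_kept_cube n).mul_prod integrable_abs_cube_gaussianReal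
  · rw [integral_prod_mul (fun ω => √(1 - partialSum (kept v v) n ω) ^ 3) (fun z : ℝ => |z| ^ 3),
      mul_comm]
    exact mul_le_mul_of_nonneg_left (h.integral_sqrt_one_sub_kept_cube_le n)
      gaussianThirdMoment_nonneg

lemma eLpNorm_partialSum_sub_gaussianCompletion_kept_le (h : IsIncrementSeq μ ℱ y v) (n : ℕ) :
    eLpNorm (fun p : Ω × ℝ => partialSum y n p.1 - gaussianCompletion (kept v y) (kept v v) n p) 3
        (μ.prod (gaussianReal 0 1)) ≤
      ENNReal.ofReal (2 * (80 * (1 + gaussianThirdMoment) * cubedError μ y v n) ^ (1 / 3 : ℝ)) := by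
  set D : Ω × ℝ → ℝ := fun p => partialSum (dropped v y) n p.1
  set G : Ω × ℝ → ℝ := fun p => √(1 - partialSum (kept v v) n p.1) * p.2
  set bound := (80 * (1 + gaussianThirdMoment) * cubedError μ y v n) ^ (1 / 3 : ℝ)
  have hc := gaussianThirdMoment_nonneg
  have herr := cubedError_nonneg μ y v n
  have hDm : Measurable (partialSum (dropped v y) n) :=
    (measurable_partialSum h.isIncrementSeq_dropped.adapted n).mono (ℱ.le n) le_rfl
  have hVm : Measurable (partialSum (kept v v) n) := Finset.measurable_sum _ fun k _ =>
    (h.isIncrementSeq_kept.isCondCentered k).measurable.mono (ℱ.le k) le_rfl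
  have hD : eLpNorm D 3 (μ.prod (gaussianReal 0 1)) ≤ ENNReal.ofReal bound := by
    have := eLpNorm_comp_measurePreserving (p := 3) hDm.aestronglyMeasurable
      (measurePreserving_fst (μ := μ) (ν := gaussianReal 0 1))
    refine (this.trans_le (h.eLpNorm_partialSum_dropped_le n)).trans (ENNReal.ofReal_le_ofReal ?_)
    exact rpow_le_rpow (by positivity) (by nlinarith) (by norm_num)
  have hG : eLpNorm G 3 (μ.prod (gaussianReal 0 1)) ≤ ENNReal.ofReal bound := by
    refine (h.eLpNorm_sqrt_one_sub_kept_mul_le n).trans (ENNReal.ofReal_le_ofReal ?_)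
    exact rpow_le_rpow (by positivity) (by nlinarith) (by norm_num)
  have split : (fun p => partialSum y n p.1 - gaussianCompletion (kept v y) (kept v v) n p) =
      D - G := funext fun p => by
    simp only [D, G, gaussianCompletion, Pi.sub_apply, ← partialSum_kept_add_dropped v y n p.1]
    ring
  rw [split, two_mul, ENNReal.ofReal_add (by positivity) (by positivity)]
  exact (eLpNorm_sub_le (by fun_prop) (by fun_prop) (by norm_num)).trans (add_le_add hD hG)

lemma exists_monotone_map_eq_map_gaussianCompletion_kept (h : IsIncrementSeq μ ℱ y v) (n : ℕ) :
    ∃ T : ℝ → ℝ, Monotone T ∧ (gaussianReal 0 1).map T =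
        (μ.prod (gaussianReal 0 1)).map (gaussianCompletion (kept v y) (kept v v) n) ∧
      eLpNorm (fun x => T x - x) 3 (gaussianReal 0 1) ≤
        ENNReal.ofReal ((80 * (1 + gaussianThirdMoment) * cubedError μ y v n) ^ (1 / 3 : ℝ)) := by
  have : IsProbabilityMeasure
      ((μ.prod (gaussianReal 0 1)).map (gaussianCompletion (kept v y) (kept v v) n)) :=
    Measure.isProbabilityMeasure_map
      (h.isIncrementSeq_kept.measurable_gaussianCompletion n).aemeasurable
  have : NullSingletonClass (gaussianReal 0 1) := nullSingletonClass_gaussianReal one_ne_zero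
  have : (gaussianReal 0 1).IsOpenPosMeasure :=
    (gaussianReal_absolutelyContinuous' 0 one_ne_zero).isOpenPosMeasure
  obtain ⟨T, hT, hγ⟩ := exists_monotone_map_eq (gaussianReal 0 1)
    ((μ.prod (gaussianReal 0 1)).map (gaussianCompletion (kept v y) (kept v v) n))
  have hK : ∀ f f₁ f₂, HasTaylorBound f f₁ f₂ (8 / 3) →
      ∫ x, f x ∂((gaussianReal 0 1).map T) - ∫ x, f x ∂gaussianReal 0 1 ≤
        8 / 3 * ((1 + gaussianThirdMoment) * cubedError μ y v n) := fun f f₁ f₂ hf => by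
    rw [hγ, h.isIncrementSeq_kept.integral_comp_gaussianCompletion hf.measurable hf.bounded]
    exact h.integral_gaussianSmoothing_kept_sub_le (by norm_num) hf n
  refine ⟨T, hT, hγ, (eLpNorm_three_displacement_le hT hK).trans_eq ?_⟩
  congr 2
  ring

theorem wassersteinDist_three_le (h : IsIncrementSeq μ ℱ y v) (n : ℕ) :
    wassersteinDist 3 (μ.map (partialSum y n)) (gaussianReal 0 1) ≤
      3 * (80 * (1 + gaussianThirdMoment) * cubedError μ y v n) ^ (1 / 3 : ℝ) := by
  have hc := gaussianThirdMoment_nonneg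
  have herr := cubedError_nonneg μ y v n
  have hS : Measurable (partialSum y n) := (measurable_partialSum h.adapted n).mono (ℱ.le n) le_rfl
  have hU := h.isIncrementSeq_kept.measurable_gaussianCompletion n
  have hlaw : (μ.prod (gaussianReal 0 1)).map (partialSum y n ∘ Prod.fst) =
      μ.map (partialSum y n) := by
    rw [← Measure.map_map hS measurable_fst, ← Measure.fst, Measure.fst_prod]
  obtain ⟨T, hT, hγ, displacement⟩ := h.exists_monotone_map_eq_map_gaussianCompletion_kept n
  have approximation := h.eLpNorm_partialSum_sub_gaussianCompletion_kept_le n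
  rw [← ENNReal.ofReal_ofNat 3] at displacement approximation
  have := wassersteinDist_le_of_transport (hS.comp measurable_fst) hU hT.measurable hγ
    (by norm_num) (by positivity) (by positivity) approximation displacement
  rw [hlaw] at this
  linarith

end IsIncrementSeq

end Comparison

/-! ### Martingale difference sequences -/

section CondVariance

variable {Ω : Type*} {m0 : MeasurableSpace Ω} {μ : Measure Ω} {m : MeasurableSpace Ω} {y v : Ω → ℝ}

lemma isCondCentered_condExp_sq (hy : MemLp y 3 μ) (hzero : μ[y | m] =ᵐ[μ] 0) :
    IsCondCentered μ m y (fun ω => max 0 ((μ[fun ω' => y ω' ^ 2 | m]) ω)) where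
  memLp := hy
  measurable := measurable_const.max stronglyMeasurable_condExp.measurable
  nonneg _ := le_max_left _ _
  condExp_eq_zero := hzero
  condExp_sq := by
    filter_upwards [condExp_nonneg (.of_forall fun ω => sq_nonneg (y ω))] with ω hω
    exact (max_eq_right hω).symm

lemma IsCondCentered.div_const (h : IsCondCentered μ m y v) (c : ℝ) :
    IsCondCentered μ m (fun ω => y ω / c) (fun ω => v ω / c ^ 2) where
  memLp := by simpa only [div_eq_mul_inv] using h.memLp.mul_const c⁻¹
  measurable := h.measurable.div_const _
  nonneg ω := div_nonneg (h.nonneg ω) (sq_nonneg c)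
  condExp_eq_zero := by
    have scale : (fun ω => y ω / c) = c⁻¹ • y := funext fun ω => div_eq_inv_mul _ _
    rw [scale]
    filter_upwards [condExp_smul c⁻¹ y m, h.condExp_eq_zero] with ω hsmul hzero
    rw [hsmul, Pi.smul_apply, hzero, Pi.zero_apply, smul_zero]
  condExp_sq := by
    have scale : (fun ω => (y ω / c) ^ 2) = (c ^ 2)⁻¹ • fun ω => y ω ^ 2 :=
      funext fun ω => (div_pow _ _ _).trans (div_eq_inv_mul _ _)
    rw [scale]
    filter_upwards [condExp_smul (c ^ 2)⁻¹ (fun ω => y ω ^ 2) m, h.condExp_sq] with ω hsmul hsq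
    rw [hsmul, Pi.smul_apply, hsq, smul_eq_mul, div_eq_inv_mul]

end CondVariance

lemma div_cube_rpow_third {a b : ℝ} (ha : 0 ≤ a) (hb : 0 ≤ b) :
    (a / b ^ 3) ^ (1 / 3 : ℝ) = a ^ (1 / 3 : ℝ) / b := by
  rw [div_rpow ha (by positivity), ← rpow_natCast, ← rpow_mul hb]
  norm_num

section MDS

variable {Ω : Type*}

/-- The sequence `Y 1, …, Y n` indexed from `0` and continued by zeros. -/
def shiftedIncrement (n : ℕ) (Y : ℕ → Ω → ℝ) (k : ℕ) : Ω → ℝ := if k < n then Y (k + 1) else 0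

lemma shiftedIncrement_of_lt {n k : ℕ} (hk : k < n) (Y : ℕ → Ω → ℝ) :
    shiftedIncrement n Y k = Y (k + 1) := if_pos hk

lemma shiftedIncrement_induction {n : ℕ} {Y : ℕ → Ω → ℝ} {p : ℕ → (Ω → ℝ) → Prop}
    (hzero : ∀ k, p k 0) (hY : ∀ k < n, p k (Y (k + 1))) (k : ℕ) :
    p k (shiftedIncrement n Y k) := by
  unfold shiftedIncrement
  split_ifs with hk
  · exact hY k hk
  · exact hzero k

lemma sum_Icc_one_eq_sum_range {M : Type*} [AddCommMonoid M] (a : ℕ → M) (n : ℕ) :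
    ∑ i ∈ Finset.Icc 1 n, a i = ∑ k ∈ Finset.range n, a (k + 1) := by
  rw [Finset.range_eq_Ico, Finset.sum_Ico_add' a 0 n 1]
  rfl

lemma partialSum_shiftedIncrement (Y : ℕ → Ω → ℝ) (n : ℕ) (ω : Ω) :
    partialSum (shiftedIncrement n Y) n ω = ∑ i ∈ Finset.Icc 1 n, Y i ω := by
  rw [partialSum, sum_Icc_one_eq_sum_range]
  exact Finset.sum_congr rfl fun k hk => by rw [shiftedIncrement_of_lt (Finset.mem_range.1 hk)]

variable [m0 : MeasurableSpace Ω] {μ : Measure Ω} {F : ℕ → MeasurableSpace Ω} {n : ℕ}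
  {Y : ℕ → Ω → ℝ} {sn : ℝ}

/-- The normalized conditional variances of `shiftedIncrement n Y`, in a nonnegative version. -/
def normalizedVariance (μ : Measure Ω) (F : ℕ → MeasurableSpace Ω) (n : ℕ) (Y : ℕ → Ω → ℝ)
    (sn : ℝ) (k : ℕ) (ω : Ω) : ℝ :=
  max 0 ((μ[fun ω' => shiftedIncrement n Y k ω' ^ 2 | F k]) ω) / sn ^ 2

lemma partialSum_normalizedVariance_ae_eq (μ : Measure Ω) (F : ℕ → MeasurableSpace Ω) (n : ℕ)
    (Y : ℕ → Ω → ℝ) (sn : ℝ) :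
    partialSum (normalizedVariance μ F n Y sn) n =ᵐ[μ] fun ω =>
      (∑ i ∈ Finset.Icc 1 n, (μ[fun ω' => Y i ω' ^ 2 | F (i - 1)]) ω) / sn ^ 2 := by
  have nonneg : ∀ᵐ ω ∂μ, ∀ k, 0 ≤ (μ[fun ω' => shiftedIncrement n Y k ω' ^ 2 | F k]) ω :=
    ae_all_iff.2 fun k => condExp_nonneg (.of_forall fun ω => sq_nonneg _)
  filter_upwards [nonneg] with ω hω
  rw [partialSum, sum_Icc_one_eq_sum_range, Finset.sum_div]
  refine Finset.sum_congr rfl fun k hk => ?_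
  rw [normalizedVariance, max_eq_right (hω k), shiftedIncrement_of_lt (Finset.mem_range.1 hk),
    Nat.add_sub_cancel]

lemma cubedError_normalized (μ : Measure Ω) (F : ℕ → MeasurableSpace Ω) (n : ℕ) (Y : ℕ → Ω → ℝ)
    (hsn : 0 < sn) :
    cubedError μ (fun k ω => shiftedIncrement n Y k ω / sn) (normalizedVariance μ F n Y sn) n =
      (∑ i ∈ Finset.Icc 1 n, ∫ ω, |Y i ω| ^ 3 ∂μ) / sn ^ 3 +
        ∫ ω, |(∑ i ∈ Finset.Icc 1 n, (μ[fun ω' => Y i ω' ^ 2 | F (i - 1)]) ω) / sn ^ 2 - 1|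
          ^ (3 / 2 : ℝ) ∂μ := by
  have moments : ∀ k ∈ Finset.range n, ∫ ω, |shiftedIncrement n Y k ω / sn| ^ 3 ∂μ =
      (∫ ω, |Y (k + 1) ω| ^ 3 ∂μ) / sn ^ 3 := fun k hk => by
    simp only [shiftedIncrement_of_lt (Finset.mem_range.1 hk), abs_div, div_pow, abs_of_pos hsn,
      integral_div]
  rw [cubedError, Finset.sum_congr rfl moments, sum_Icc_one_eq_sum_range, Finset.sum_div]
  congr 1
  refine integral_congr_ae ?_
  filter_upwards [partialSum_normalizedVariance_ae_eq μ F n Y sn] with ω hω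
  rw [hω, sqrt_cube_eq_rpow (abs_nonneg _)]

lemma rnorm_three_halves_sqrt (μ : Measure Ω) (U : Ω → ℝ) :
    rnorm μ (3 / 2) U ^ (1 / 2 : ℝ) = (∫ ω, |U ω| ^ (3 / 2 : ℝ) ∂μ) ^ (1 / 3 : ℝ) := by
  rw [rnorm, ← rpow_mul (integral_nonneg fun ω => by positivity)]
  norm_num

namespace IsMDS

/-- The filtration of a martingale difference sequence as a bundled object. -/
protected def filtration (hY : IsMDS μ F n Y) : Filtration ℕ m0 := ⟨F, hY.mono, hY.le⟩

lemma measurable_shiftedIncrement (hY : IsMDS μ F n Y) (k : ℕ) :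
    Measurable[F (k + 1)] (shiftedIncrement n Y k) :=
  shiftedIncrement_induction (p := fun k f => Measurable[F (k + 1)] f) (fun _ => measurable_const)
    (fun k hk => hY.adapted (k + 1) k.succ_pos hk) k

lemma integrable_shiftedIncrement [IsFiniteMeasure μ] (hY : IsMDS μ F n Y) (k : ℕ) :
    Integrable (shiftedIncrement n Y k) μ :=
  shiftedIncrement_induction (p := fun _ f => Integrable f μ) (fun _ => integrable_zero _ _ _)
    (fun k hk => (hY.memL2 (k + 1) k.succ_pos hk).integrable one_le_two) k

lemma condExp_shiftedIncrement (hY : IsMDS μ F n Y) (k : ℕ) :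
    μ[shiftedIncrement n Y k | F k] =ᵐ[μ] 0 :=
  shiftedIncrement_induction (p := fun k f => μ[f | F k] =ᵐ[μ] 0) (fun _ => .of_eq condExp_zero)
    (fun k hk => hY.mdiff (k + 1) k.succ_pos hk) k

lemma isIncrementSeq (hY : IsMDS μ F n Y) (h3 : ∀ i ∈ Finset.Icc 1 n, MemLp (Y i) 3 μ) (sn : ℝ) :
    IsIncrementSeq μ hY.filtration (fun k ω => shiftedIncrement n Y k ω / sn)
      (normalizedVariance μ F n Y sn) where
  adapted k := (hY.measurable_shiftedIncrement k).div_const sn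
  isCondCentered k :=
    (isCondCentered_condExp_sq (shiftedIncrement_induction (p := fun _ f => MemLp f 3 μ)
      (fun _ => MemLp.zero) (fun k hk => h3 (k + 1) (Finset.mem_Icc.2 ⟨k.succ_pos, hk⟩)) k)
      (hY.condExp_shiftedIncrement k)).div_const sn

lemma memLp_of_memLp_sum [IsFiniteMeasure μ] (hY : IsMDS μ F n Y)
    {p : ℝ≥0∞} (hp : 1 ≤ p) (hsum : MemLp (fun ω => ∑ i ∈ Finset.Icc 1 n, Y i ω) p μ) :
    ∀ i ∈ Finset.Icc 1 n, MemLp (Y i) p μ := by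
  have martingale : Martingale (partialSum (shiftedIncrement n Y)) hY.filtration μ :=
    martingale_partialSum hY.measurable_shiftedIncrement hY.integrable_shiftedIncrement
      hY.condExp_shiftedIncrement
  have memLp_final : MemLp (partialSum (shiftedIncrement n Y) n) p μ := by
    rwa [funext (partialSum_shiftedIncrement Y n)]
  have memLp_partialSum : ∀ k ≤ n, MemLp (partialSum (shiftedIncrement n Y) k) p μ := fun k hk =>
    (memLp_final.condExp hp).ae_eq (martingale.condExp_ae_eq hk)
  intro i hi
  obtain ⟨k, rfl⟩ := Nat.exists_eq_add_of_le' (Finset.mem_Icc.1 hi).1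
  have hk : k < n := (Finset.mem_Icc.1 hi).2
  convert (memLp_partialSum (k + 1) hk).sub (memLp_partialSum k hk.le) using 1
  ext ω
  rw [Pi.sub_apply, partialSum_succ, add_sub_cancel_left, shiftedIncrement_of_lt hk]

lemma wassersteinDist_three_le_of_memLp [IsProbabilityMeasure μ] (hY : IsMDS μ F n Y)
    (h3 : ∀ i ∈ Finset.Icc 1 n, MemLp (Y i) 3 μ) (hsn : 0 < sn) :
    wassersteinDist 3 (μ.map fun ω => (∑ i ∈ Finset.Icc 1 n, Y i ω) / sn) (gaussianReal 0 1) ≤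
      3 * (80 * (1 + gaussianThirdMoment)) ^ (1 / 3 : ℝ) *
        ((∑ i ∈ Finset.Icc 1 n, ∫ ω, |Y i ω| ^ 3 ∂μ) ^ (1 / 3 : ℝ) / sn +
          rnorm μ (3 / 2) (fun ω =>
            (∑ i ∈ Finset.Icc 1 n, (μ[fun ω' => Y i ω' ^ 2 | F (i - 1)]) ω) / sn ^ 2 - 1)
              ^ (1 / 2 : ℝ)) := by
  have constant_nonneg : 0 ≤ 80 * (1 + gaussianThirdMoment) := by
    linarith [gaussianThirdMoment_nonneg]
  have bound := (hY.isIncrementSeq h3 sn).wassersteinDist_three_le n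
  have sum_eq : partialSum (fun k ω => shiftedIncrement n Y k ω / sn) n =
      fun ω => (∑ i ∈ Finset.Icc 1 n, Y i ω) / sn :=
    funext fun ω => by rw [← partialSum_shiftedIncrement, partialSum, partialSum, Finset.sum_div]
  rw [sum_eq, mul_rpow constant_nonneg (cubedError_nonneg _ _ _ _), ← mul_assoc,
    cubedError_normalized μ F n Y hsn] at bound
  have moments_nonneg : 0 ≤ ∑ i ∈ Finset.Icc 1 n, ∫ ω, |Y i ω| ^ 3 ∂μ :=
    Finset.sum_nonneg fun i _ => integral_nonneg fun ω => by positivity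
  refine bound.trans (mul_le_mul_of_nonneg_left ?_ (by positivity))
  rw [← div_cube_rpow_third moments_nonneg hsn.le, rnorm_three_halves_sqrt]
  exact rpow_add_le_add_rpow (by positivity) (integral_nonneg fun ω => by positivity)
    (by norm_num) (by norm_num)

lemma wassersteinDist_three_le_zero_of_not_memLp [IsProbabilityMeasure μ] (hY : IsMDS μ F n Y)
    (h3 : ¬∀ i ∈ Finset.Icc 1 n, MemLp (Y i) 3 μ) (hsn : sn ≠ 0) :
    wassersteinDist 3 (μ.map fun ω => (∑ i ∈ Finset.Icc 1 n, Y i ω) / sn) (gaussianReal 0 1) ≤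
      0 := by
  have measurable_sum : Measurable fun ω => (∑ i ∈ Finset.Icc 1 n, Y i ω) / sn :=
    (Finset.measurable_fun_sum _ fun i hi => (hY.adapted i (Finset.mem_Icc.1 hi).1
      (Finset.mem_Icc.1 hi).2).mono (hY.le i) le_rfl).div_const sn
  have : IsProbabilityMeasure (μ.map fun ω => (∑ i ∈ Finset.Icc 1 n, Y i ω) / sn) :=
    Measure.isProbabilityMeasure_map measurable_sum.aemeasurable
  have three : ENNReal.ofReal 3 = 3 := ENNReal.ofReal_ofNat 3
  refine wassersteinDist_le_zero_of_not_memLp three_pos (three ▸ memLp_id_gaussianReal 3)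
    fun hmap => h3 (hY.memLp_of_memLp_sum (p := 3) (by norm_num) ?_)
  rw [three, memLp_map_measure_iff aestronglyMeasurable_id measurable_sum.aemeasurable] at hmap
  simpa [Function.comp_def, div_mul_cancel₀ _ hsn] using hmap.mul_const sn

end IsMDS

end MDS

/-- Theorem 2.4: the `W₃` bound. -/
theorem w3_bound :
    ∃ C : ℝ, 0 < C ∧
      ∀ (Ω : Type) (m0 : MeasurableSpace Ω) (μ : Measure Ω), IsProbabilityMeasure μ →
      ∀ (F : ℕ → MeasurableSpace Ω) (n : ℕ) (Y : ℕ → Ω → ℝ) (sn : ℝ),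
        1 ≤ n → IsMDS μ F n Y → 0 < sn →
        sn ^ 2 = ∑ i ∈ Finset.Icc 1 n, ∫ ω, (Y i ω) ^ 2 ∂μ →
        wassersteinDist 3 (μ.map fun ω => (∑ i ∈ Finset.Icc 1 n, Y i ω) / sn) stdGaussian ≤
          C * (((∑ i ∈ Finset.Icc 1 n, ∫ ω, |Y i ω| ^ 3 ∂μ) ^ ((1 : ℝ) / 3) / sn) + rnorm μ (3 / 2) (fun ω => (∑ i ∈ Finset.Icc 1 n, (μ[fun ω' => (Y i ω') ^ 2 | F (i - 1)]) ω) / sn ^ 2 - 1) ^ ((1 : ℝ) / 2)) := by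
  have third_moment_nonneg := gaussianThirdMoment_nonneg
  refine ⟨3 * (80 * (1 + gaussianThirdMoment)) ^ (1 / 3 : ℝ), by positivity, ?_⟩
  intro Ω _ μ _ F n Y sn _ hY hsn _
  by_cases h3 : ∀ i ∈ Finset.Icc 1 n, MemLp (Y i) 3 μ
  · exact hY.wassersteinDist_three_le_of_memLp h3 hsn
  · refine (hY.wassersteinDist_three_le_zero_of_not_memLp h3 hsn.ne').trans ?_
    unfold rnorm
    positivity
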